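/- arXiv:1908.01265 — 5 statements merged into one kernel-verified Lean document; each statement's English description precedes it below -/
import Mathlib

section
/- Let U ⊆ ℝⁿ be open, let g^{ij} : U → ℝ be smooth functions such that (g^{ij}(x)) is a symmetric invertible matrix for each x, with inverse matrix (g_{ij}(x)). Let σ : U × U → ℝ be a smooth symmetric function (σ(x,x') = σ(x',x)) satisfying the Hamilton–Jacobi equation σ(x,x') = (1/2) Σ_{i,j} g^{ij}(x) σ_{,i}(x,x') σ_{,j}(x,x') on U × U, together with σ(x,x) = 0 and σ_{,i}(x,x) = 0 for all x ∈ U, and assume the diagonal Hessian ([σ_{,ij}](x)) is invertible for every x ∈ U. Then the coincidence limit of the third partial derivatives in the first argument is [σ_{,ijk}](x') = (1/2)( ∂_i g_{jk} + ∂_j g_{ik} + ∂_k g_{ij} )(x') for all x' ∈ U and all indices i, j, k. -/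
/-!
Fix `x'` and write `s = σ(·, x')`, `H = [s_{,ij}](x')`, `T_{klm} = [s_{,klm}](x')`. The function `s`
and its first derivatives vanish at `x'`, so in each term `g^{ij} s_{,i} s_{,j}` of the
Hamilton–Jacobi equation two factors vanish there, and only few terms of its higher derivatives
survive at `x'` (`pd2_mul3`, `pd3_mul3`).

* Two derivatives give `H = H G H` with `G = (g^{ij}(x'))`, so `G H = 1` as `H` is invertible, that
  is, `H = (g_{ij}(x'))`.
* Three derivatives give `T_{klm} = 3 T_{klm} + (H ∂_k G H)_{lm} + (H ∂_l G H)_{km} +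
  (H ∂_m G H)_{kl}`: the terms containing `T` are contracted with `G H = 1`.
* Differentiating `G G⁻¹ = 1` gives `∂_k (G⁻¹) = -H ∂_k G H` (`pd_gLow`), and the formula follows.
-/

open scoped BigOperators
open Set

/-- `∂/∂x^i` in the first argument of a two-point function. -/
noncomputable def d1 (n : ℕ) (i : Fin n) (f : (Fin n → ℝ) → (Fin n → ℝ) → ℝ) :
    (Fin n → ℝ) → (Fin n → ℝ) → ℝ :=
  fun x x' => fderiv ℝ (fun y => f y x') x (Pi.single i 1)

/-- `∂/∂x'^i` in the second argument of a two-point function. -/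
noncomputable def d2 (n : ℕ) (i : Fin n) (f : (Fin n → ℝ) → (Fin n → ℝ) → ℝ) :
    (Fin n → ℝ) → (Fin n → ℝ) → ℝ :=
  fun x x' => fderiv ℝ (fun y => f x y) x' (Pi.single i 1)

/-- The matrix of mixed second derivatives `σ_{,ij'} = ∂²σ/∂x^i∂x'^j` at `(x,x')`. -/
noncomputable def mixedHess (n : ℕ) (σ : (Fin n → ℝ) → (Fin n → ℝ) → ℝ)
    (x x' : Fin n → ℝ) : Matrix (Fin n) (Fin n) ℝ :=
  Matrix.of fun i j => d1 n i (d2 n j σ) x x'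

/-- The pointwise matrix `(g^{ij}(x))` of a metric-coefficient field. -/
noncomputable def gMat (n : ℕ) (g : Fin n → Fin n → (Fin n → ℝ) → ℝ)
    (x : Fin n → ℝ) : Matrix (Fin n) (Fin n) ℝ :=
  Matrix.of fun i j => g i j x

/-- The lowered metric `g_{ij}(x)`, the pointwise inverse of `(g^{ij}(x))`. -/
noncomputable def gLow (n : ℕ) (g : Fin n → Fin n → (Fin n → ℝ) → ℝ)
    (x : Fin n → ℝ) : Matrix (Fin n) (Fin n) ℝ :=
  (gMat n g x)⁻¹

/-- The partial derivative `∂_i f` of a function on `ℝⁿ`. -/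
noncomputable def pd (n : ℕ) (i : Fin n) (f : (Fin n → ℝ) → ℝ) : (Fin n → ℝ) → ℝ :=
  fun y => fderiv ℝ f y (Pi.single i 1)

/-! ### Calculus of partial derivatives on an open set -/

section Calculus

variable {n : ℕ} {U : Set (Fin n → ℝ)}

lemma smooth_diffAt (hU : IsOpen U) {f : (Fin n → ℝ) → ℝ} (hf : ContDiffOn ℝ (⊤ : ℕ∞) f U)
    {x : Fin n → ℝ} (hx : x ∈ U) : DifferentiableAt ℝ f x :=
  (hf.contDiffAt (hU.mem_nhds hx)).differentiableAt (by simp)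

lemma pd_smooth (hU : IsOpen U) {f : (Fin n → ℝ) → ℝ} (hf : ContDiffOn ℝ (⊤ : ℕ∞) f U)
    (i : Fin n) : ContDiffOn ℝ (⊤ : ℕ∞) (pd n i f) U :=
  (hf.fderiv_of_isOpen hU (m := (⊤ : ℕ∞)) (by simp)).clm_apply contDiffOn_const

lemma pd_congr (hU : IsOpen U) {f h : (Fin n → ℝ) → ℝ} (hfh : EqOn f h U) (i : Fin n) :
    EqOn (pd n i f) (pd n i h) U := by
  intro x hx
  have : f =ᶠ[nhds x] h := Filter.eventuallyEq_of_mem (hU.mem_nhds hx) hfh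
  simp only [pd, this.fderiv_eq]

lemma pd_comm (hU : IsOpen U) {f : (Fin n → ℝ) → ℝ} (hf : ContDiffOn ℝ (⊤ : ℕ∞) f U)
    (i j : Fin n) : EqOn (pd n i (pd n j f)) (pd n j (pd n i f)) U := by
  intro x hx
  have hsymm : IsSymmSndFDerivAt ℝ f x :=
    (hf.contDiffAt (hU.mem_nhds hx)).isSymmSndFDerivAt (by
      simp only [minSmoothness_of_isRCLikeNormedField]; exact WithTop.coe_le_coe.2 le_top)
  have hd : DifferentiableAt ℝ (fderiv ℝ f) x :=
    ((hf.fderiv_of_isOpen hU (m := (⊤ : ℕ∞)) (by simp)).contDiffAt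
      (hU.mem_nhds hx)).differentiableAt (by simp)
  have key : ∀ a b : Fin n, pd n a (pd n b f) x =
      fderiv ℝ (fderiv ℝ f) x (Pi.single a 1) (Pi.single b 1) := by
    intro a b
    change fderiv ℝ (fun y => fderiv ℝ f y (Pi.single b 1)) x (Pi.single a 1) = _
    rw [fderiv_clm_apply hd (differentiableAt_const _)]
    simp
  rw [key, key]
  exact hsymm _ _

lemma pd_sum {ι : Type*} (t : Finset ι) (hU : IsOpen U) {f : ι → (Fin n → ℝ) → ℝ}
    (hf : ∀ a, ContDiffOn ℝ (⊤ : ℕ∞) (f a) U) (i : Fin n) :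
    EqOn (pd n i (fun y => ∑ a ∈ t, f a y)) (fun y => ∑ a ∈ t, pd n i (f a) y) U := by
  intro x hx
  simp only [pd]
  rw [fderiv_fun_sum (fun a _ => smooth_diffAt hU (hf a) hx)]
  simp

lemma pd_const_mul (hU : IsOpen U) {f : (Fin n → ℝ) → ℝ}
    (hf : ContDiffOn ℝ (⊤ : ℕ∞) f U) (c : ℝ) (i : Fin n) :
    EqOn (pd n i (fun y => c * f y)) (fun y => c * pd n i f y) U := by
  intro x hx
  simp only [pd]
  rw [fderiv_const_mul (smooth_diffAt hU hf hx)]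
  simp

lemma pd_mul {u v : (Fin n → ℝ) → ℝ} {x : Fin n → ℝ} (hu : DifferentiableAt ℝ u x)
    (hv : DifferentiableAt ℝ v x) (i : Fin n) :
    pd n i (fun y => u y * v y) x = pd n i u x * v x + u x * pd n i v x := by
  simp only [pd]
  rw [fderiv_fun_mul hu hv]
  simp
  ring

lemma pd_add3 (hU : IsOpen U) {u v w : (Fin n → ℝ) → ℝ}
    (hu : ContDiffOn ℝ (⊤ : ℕ∞) u U) (hv : ContDiffOn ℝ (⊤ : ℕ∞) v U)
    (hw : ContDiffOn ℝ (⊤ : ℕ∞) w U) (i : Fin n) :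
    EqOn (pd n i (fun y => u y + v y + w y))
      (fun y => pd n i u y + pd n i v y + pd n i w y) U := by
  intro x hx
  have hu := smooth_diffAt hU hu hx
  have hv := smooth_diffAt hU hv hx
  have hw := smooth_diffAt hU hw hx
  simp only [pd]
  rw [fderiv_fun_add (hu.fun_add hv) hw, fderiv_fun_add hu hv]
  simp

/-- The pointwise product of three functions. -/
def mul3 (a u v : (Fin n → ℝ) → ℝ) : (Fin n → ℝ) → ℝ := fun y => a y * u y * v y

lemma mul3_smooth {a u v : (Fin n → ℝ) → ℝ} (ha : ContDiffOn ℝ (⊤ : ℕ∞) a U)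
    (hu : ContDiffOn ℝ (⊤ : ℕ∞) u U) (hv : ContDiffOn ℝ (⊤ : ℕ∞) v U) :
    ContDiffOn ℝ (⊤ : ℕ∞) (mul3 a u v) U := (ha.mul hu).mul hv

lemma pd_mul3 (hU : IsOpen U) {a u v : (Fin n → ℝ) → ℝ} (ha : ContDiffOn ℝ (⊤ : ℕ∞) a U)
    (hu : ContDiffOn ℝ (⊤ : ℕ∞) u U) (hv : ContDiffOn ℝ (⊤ : ℕ∞) v U) (i : Fin n) :
    EqOn (pd n i (mul3 a u v)) (fun y => mul3 (pd n i a) u v y + mul3 a (pd n i u) v y +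
      mul3 a u (pd n i v) y) U := by
  intro x hx
  have ha := smooth_diffAt hU ha hx
  have hu := smooth_diffAt hU hu hx
  have hv := smooth_diffAt hU hv hx
  change pd n i (fun y => (a y * u y) * v y) x = _
  rw [pd_mul (ha.fun_mul hu) hv, pd_mul ha hu]
  simp only [mul3]
  ring

lemma pd2_mul3_expand (hU : IsOpen U) {a u v : (Fin n → ℝ) → ℝ}
    (ha : ContDiffOn ℝ (⊤ : ℕ∞) a U)
    (hu : ContDiffOn ℝ (⊤ : ℕ∞) u U) (hv : ContDiffOn ℝ (⊤ : ℕ∞) v U) (l m : Fin n) :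
    EqOn (pd n l (pd n m (mul3 a u v)))
      (fun y => pd n l (mul3 (pd n m a) u v) y + pd n l (mul3 a (pd n m u) v) y +
        pd n l (mul3 a u (pd n m v)) y) U :=
  (pd_congr hU (pd_mul3 hU ha hu hv m) l).trans
    (pd_add3 hU (mul3_smooth (pd_smooth hU ha m) hu hv) (mul3_smooth ha (pd_smooth hU hu m) hv)
      (mul3_smooth ha hu (pd_smooth hU hv m)) l)

/-- Second derivatives of `a u v` at a common zero of `u` and `v`. -/
lemma pd2_mul3 (hU : IsOpen U) {a u v : (Fin n → ℝ) → ℝ} (ha : ContDiffOn ℝ (⊤ : ℕ∞) a U)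
    (hu : ContDiffOn ℝ (⊤ : ℕ∞) u U) (hv : ContDiffOn ℝ (⊤ : ℕ∞) v U)
    {p : Fin n → ℝ} (hp : p ∈ U) (hu0 : u p = 0) (hv0 : v p = 0) (l m : Fin n) :
    pd n l (pd n m (mul3 a u v)) p =
      a p * (pd n l u p * pd n m v p + pd n m u p * pd n l v p) := by
  rw [pd2_mul3_expand hU ha hu hv l m hp]
  simp only [pd_mul3 hU (pd_smooth hU ha m) hu hv l hp, pd_mul3 hU ha (pd_smooth hU hu m) hv l hp,
    pd_mul3 hU ha hu (pd_smooth hU hv m) l hp, mul3, hu0, hv0]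
  ring

/-- Third derivatives of `a u v` at a common zero of `u` and `v`. -/
lemma pd3_mul3 (hU : IsOpen U) {a u v : (Fin n → ℝ) → ℝ} (ha : ContDiffOn ℝ (⊤ : ℕ∞) a U)
    (hu : ContDiffOn ℝ (⊤ : ℕ∞) u U) (hv : ContDiffOn ℝ (⊤ : ℕ∞) v U)
    {p : Fin n → ℝ} (hp : p ∈ U) (hu0 : u p = 0) (hv0 : v p = 0) (k l m : Fin n) :
    pd n k (pd n l (pd n m (mul3 a u v))) p =
      pd n k a p * (pd n l u p * pd n m v p + pd n m u p * pd n l v p) +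
      pd n l a p * (pd n k u p * pd n m v p + pd n m u p * pd n k v p) +
      pd n m a p * (pd n k u p * pd n l v p + pd n l u p * pd n k v p) +
      a p * (pd n k (pd n l u) p * pd n m v p + pd n m u p * pd n k (pd n l v) p +
        pd n k (pd n m u) p * pd n l v p + pd n l u p * pd n k (pd n m v) p +
        pd n l (pd n m u) p * pd n k v p + pd n k u p * pd n l (pd n m v) p) := by
  have ham := pd_smooth hU ha m
  have hum := pd_smooth hU hu m
  have hvm := pd_smooth hU hv m
  have hal := pd_smooth hU ha l
  have hul := pd_smooth hU hu l
  have hvl := pd_smooth hU hv l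
  have haml := pd_smooth hU ham l
  have huml := pd_smooth hU hum l
  have hvml := pd_smooth hU hvm l
  rw [pd_congr hU (pd2_mul3_expand hU ha hu hv l m) k hp,
    pd_add3 hU (pd_smooth hU (mul3_smooth ham hu hv) l) (pd_smooth hU (mul3_smooth ha hum hv) l)
      (pd_smooth hU (mul3_smooth ha hu hvm) l) k hp]
  simp only [pd2_mul3_expand hU ham hu hv k l hp, pd2_mul3_expand hU ha hum hv k l hp,
    pd2_mul3_expand hU ha hu hvm k l hp]
  simp only [pd_mul3 hU haml hu hv k hp, pd_mul3 hU ham hul hv k hp, pd_mul3 hU ham hu hvl k hp,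
    pd_mul3 hU hal hum hv k hp, pd_mul3 hU ha huml hv k hp, pd_mul3 hU ha hum hvl k hp,
    pd_mul3 hU hal hu hvm k hp, pd_mul3 hU ha hul hvm k hp, pd_mul3 hU ha hu hvml k hp,
    mul3, hu0, hv0]
  ring

lemma pd_half_sum (hU : IsOpen U) {f : Fin n → Fin n → (Fin n → ℝ) → ℝ}
    (hf : ∀ i j, ContDiffOn ℝ (⊤ : ℕ∞) (f i j) U) (m : Fin n) :
    EqOn (pd n m (fun y => (1 / 2) * ∑ i, ∑ j, f i j y))
      (fun y => (1 / 2) * ∑ i, ∑ j, pd n m (f i j) y) U := by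
  have h1 : ∀ i, ContDiffOn ℝ (⊤ : ℕ∞) (fun y => ∑ j, f i j y) U :=
    fun i => ContDiffOn.sum fun j _ => hf i j
  intro x hx
  rw [pd_const_mul hU (ContDiffOn.sum fun i _ => h1 i) _ m hx]
  simp only [pd_sum Finset.univ hU h1 m hx]
  simp only [pd_sum Finset.univ hU (hf _) m hx]

end Calculus

/-! ### Derivative of the inverse metric -/

lemma det_diffAt {n m : ℕ} {x : Fin n → ℝ} {A : (Fin n → ℝ) → Matrix (Fin m) (Fin m) ℝ}
    (hA : ∀ i j, DifferentiableAt ℝ (fun y => A y i j) x) :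
    DifferentiableAt ℝ (fun y => (A y).det) x := by
  simp only [Matrix.det_apply]
  refine DifferentiableAt.fun_sum fun τ _ => ?_
  refine DifferentiableAt.fun_const_smul ?_ _
  exact (HasFDerivAt.finsetProd fun i _ => (hA (τ i) i).hasFDerivAt).differentiableAt

section Inverse

variable {n : ℕ} {U : Set (Fin n → ℝ)} {g : Fin n → Fin n → (Fin n → ℝ) → ℝ}

lemma gLow_diffAt {x : Fin n → ℝ}
    (hg : ∀ i j, DifferentiableAt ℝ (g i j) x) (hx : IsUnit (gMat n g x).det) (i j : Fin n) :
    DifferentiableAt ℝ (fun y => gLow n g y i j) x := by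
  have h1 : DifferentiableAt ℝ (fun y => (gMat n g y).det) x := det_diffAt hg
  have h2 : DifferentiableAt ℝ (fun y => (gMat n g y).adjugate i j) x := by
    simp only [Matrix.adjugate_apply]
    refine det_diffAt fun a b => ?_
    by_cases h : a = j
    · subst h; simp
    · simpa [Matrix.updateRow_ne h, gMat] using hg a b
  simp only [gLow, Matrix.inv_def, Matrix.smul_apply, Ring.inverse_eq_inv', smul_eq_mul]
  exact (h1.fun_inv hx.ne_zero).fun_mul h2

/-- `∂_k (G⁻¹) = -G⁻¹ (∂_k G) G⁻¹`, from differentiating `G G⁻¹ = 1`. -/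
lemma pd_gLow (hU : IsOpen U) (hgsmooth : ∀ i j, ContDiffOn ℝ (⊤ : ℕ∞) (g i j) U)
    (hginv : ∀ x ∈ U, IsUnit (gMat n g x).det) {x : Fin n → ℝ} (hx : x ∈ U) (k l m : Fin n) :
    pd n k (fun y => gLow n g y l m) x =
      -∑ i, ∑ j, gLow n g x l i * pd n k (g i j) x * gLow n g x j m := by
  have hg : ∀ i j, DifferentiableAt ℝ (g i j) x := fun i j => smooth_diffAt hU (hgsmooth i j) hx
  have hL := gLow_diffAt hg (hginv x hx)
  have hrow : ∀ i, ∑ j, g i j x * pd n k (fun y => gLow n g y j m) x =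
      -∑ j, pd n k (g i j) x * gLow n g x j m := by
    intro i
    have h1 : EqOn (fun y => ∑ j, g i j y * gLow n g y j m)
        (fun _ => (1 : Matrix (Fin n) (Fin n) ℝ) i m) U := by
      intro y hy
      have := Matrix.mul_nonsing_inv _ (hginv y hy)
      simpa [Matrix.mul_apply, gMat, gLow] using congrFun (congrFun this i) m
    have h2 := pd_congr hU h1 k hx
    have h3 : pd n k (fun y => ∑ j, g i j y * gLow n g y j m) x =
        ∑ j, pd n k (fun y => g i j y * gLow n g y j m) x := by
      simp only [pd]
      rw [fderiv_fun_sum fun j _ => (hg i j).fun_mul (hL j m)]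
      simp
    rw [h3] at h2
    simp only [pd_mul (hg i _) (hL _ m), Finset.sum_add_distrib] at h2
    have h4 : pd n k (fun _ => (1 : Matrix (Fin n) (Fin n) ℝ) i m) x = 0 := by simp [pd]
    linarith
  have hvec : Matrix.mulVec (gMat n g x) (fun j => pd n k (fun y => gLow n g y j m) x) =
      fun i => -∑ j, pd n k (g i j) x * gLow n g x j m := by
    funext i
    simpa [Matrix.mulVec, dotProduct, gMat] using hrow i
  have h5 := congrArg (fun w => Matrix.mulVec (gLow n g x) w) hvec
  simp only [Matrix.mulVec_mulVec] at h5
  rw [gLow, Matrix.nonsing_inv_mul _ (hginv x hx), Matrix.one_mulVec] at h5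
  have h6 := congrFun h5 l
  simp only [Matrix.mulVec, dotProduct] at h6
  rw [h6]
  simp [gLow, Finset.mul_sum, mul_assoc]

end Inverse

/-! ### The algebra of the coincidence limits -/

section Algebra

variable {n : ℕ}

/-- If `H` is symmetric and invertible and equals the symmetrization of `H G Hᵀ`, then `G H = 1`. -/
lemma mul_eq_one_of_hess {G H : Matrix (Fin n) (Fin n) ℝ} (hG : ∀ i j, G i j = G j i)
    (hH : ∀ i j, H i j = H j i) (hdet : IsUnit H.det)
    (h : ∀ l m, H l m = (1 / 2) * ∑ i, ∑ j, G i j * (H l i * H m j + H m i * H l j)) :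
    G * H = 1 := by
  have hHGH : H * (G * H) = H * 1 := by
    rw [mul_one]
    ext l m
    have e1 : (H * (G * H)) l m = ∑ i, ∑ j, G i j * (H l i * H m j) := by
      simp only [Matrix.mul_apply, Finset.mul_sum]
      refine Finset.sum_congr rfl fun i _ => Finset.sum_congr rfl fun j _ => ?_
      rw [hH j m]; ring
    have e2 : ∑ i, ∑ j, G i j * (H m i * H l j) = ∑ i, ∑ j, G i j * (H l i * H m j) := by
      rw [Finset.sum_comm]
      refine Finset.sum_congr rfl fun i _ => Finset.sum_congr rfl fun j _ => ?_
      rw [hG j i]; ring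
    have := h l m
    simp only [mul_add, Finset.sum_add_distrib] at this
    rw [e2] at this
    rw [e1]; linarith
  exact (Matrix.isUnit_iff_isUnit_det H).2 hdet |>.mul_left_cancel hHGH

/-- Contracting `G H = 1` against a vector, in the index order of the Hamilton–Jacobi terms. -/
lemma contract {G H : Matrix (Fin n) (Fin n) ℝ} (hH : ∀ i j, H i j = H j i) (h : G * H = 1)
    (t : Fin n → ℝ) (m : Fin n) : ∑ i, ∑ j, G i j * (t i * H m j) = t m := by
  have e : ∀ i, ∑ j, G i j * (t i * H m j) = t i * (1 : Matrix (Fin n) (Fin n) ℝ) i m := by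
    intro i
    rw [← h, Matrix.mul_apply, Finset.mul_sum]
    refine Finset.sum_congr rfl fun j _ => ?_
    rw [hH m j]; ring
  simp [e, Matrix.one_apply]

end Algebra

/-- Coincidence limit of the third partial derivatives of the Ruse–Synge function in the
first argument: `[σ_{,ijk}](x') = ½ (∂_i g_{jk} + ∂_j g_{ik} + ∂_k g_{ij})(x')`. -/
theorem ruseSynge_third_coincidence (n : ℕ) (hn : 1 ≤ n)
    (U : Set (Fin n → ℝ)) (hU : IsOpen U)
    (g : Fin n → Fin n → (Fin n → ℝ) → ℝ)
    (hgsmooth : ∀ i j, ContDiffOn ℝ (⊤ : ℕ∞) (g i j) U)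
    (hgsymm : ∀ i j, ∀ x ∈ U, g i j x = g j i x)
    (hginv : ∀ x ∈ U, IsUnit (gMat n g x).det)
    (σ : (Fin n → ℝ) → (Fin n → ℝ) → ℝ)
    (hσ : ContDiffOn ℝ (⊤ : ℕ∞) (fun p : (Fin n → ℝ) × (Fin n → ℝ) => σ p.1 p.2) (U ×ˢ U))
    (hσsymm : ∀ x ∈ U, ∀ x' ∈ U, σ x x' = σ x' x)
    (hHJ : ∀ x ∈ U, ∀ x' ∈ U,
      σ x x' = (1 / 2) * ∑ i, ∑ j, g i j x * d1 n i σ x x' * d1 n j σ x x')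
    (hdiag0 : ∀ x ∈ U, σ x x = 0)
    (hdiag1 : ∀ x ∈ U, ∀ i : Fin n, d1 n i σ x x = 0)
    (hhess : ∀ x ∈ U, IsUnit (Matrix.of fun i j => d1 n i (d1 n j σ) x x :
      Matrix (Fin n) (Fin n) ℝ).det)
    (x' : Fin n → ℝ) (hx' : x' ∈ U) :
    ∀ i j k : Fin n,
      d1 n i (d1 n j (d1 n k σ)) x' x' =
        (1 / 2) * (pd n i (fun y => gLow n g y j k) x' +
          pd n j (fun y => gLow n g y i k) x' +
          pd n k (fun y => gLow n g y i j) x') := by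
  intro k l m
  set s : (Fin n → ℝ) → ℝ := fun y => σ y x' with hs
  have hsU : ContDiffOn ℝ (⊤ : ℕ∞) s U :=
    hσ.comp (f := fun y : Fin n → ℝ => (y, x')) (by fun_prop) fun y hy => ⟨hy, hx'⟩
  have hds : ∀ i, ContDiffOn ℝ (⊤ : ℕ∞) (pd n i s) U := pd_smooth hU hsU
  have hs0 : ∀ i, pd n i s x' = 0 := hdiag1 x' hx'
  have hF : ∀ i j, ContDiffOn ℝ (⊤ : ℕ∞) (mul3 (g i j) (pd n i s) (pd n j s)) U :=
    fun i j => mul3_smooth (hgsmooth i j) (hds i) (hds j)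
  have h0 : EqOn s (fun y => (1 / 2) * ∑ i, ∑ j, mul3 (g i j) (pd n i s) (pd n j s) y) U :=
    fun y hy => hHJ y hy x' hx'
  have h1 := fun m => (pd_congr hU h0 m).trans (pd_half_sum hU hF m)
  have h2 := fun l m => (pd_congr hU (h1 m) l).trans
    (pd_half_sum hU (fun i j => pd_smooth hU (hF i j) m) l)
  have h3 := fun k l m => (pd_congr hU (h2 l m) k).trans
    (pd_half_sum hU (fun i j => pd_smooth hU (pd_smooth hU (hF i j) m) l) k)
  set G := gMat n g x' with hGdef
  set H : Matrix (Fin n) (Fin n) ℝ := Matrix.of fun i j => pd n i (pd n j s) x' with hHdef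
  have hHap : ∀ i j, pd n i (pd n j s) x' = H i j := fun _ _ => rfl
  have hGap : ∀ i j, g i j x' = G i j := fun _ _ => rfl
  have hG : ∀ i j, G i j = G j i := fun i j => hgsymm i j x' hx'
  have hH : ∀ i j, H i j = H j i := fun i j => pd_comm hU hsU i j hx'
  have hGH : G * H = 1 := by
    refine mul_eq_one_of_hess hG hH (hhess x' hx') fun l m => ?_
    rw [← hHap l m, h2 l m hx']
    simp only [pd2_mul3 hU (hgsmooth _ _) (hds _) (hds _) hx' (hs0 _) (hs0 _), hHap, hGap]
  have hHlow : gLow n g x' = H := Matrix.inv_eq_right_inv hGH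
  have hlow : ∀ k l m, pd n k (fun y => gLow n g y l m) x' =
      -∑ i, ∑ j, pd n k (g i j) x' * (H l i * H m j) := by
    intro k l m
    rw [pd_gLow hU hgsmooth hginv hx', hHlow]
    congr 1
    refine Finset.sum_congr rfl fun i _ => Finset.sum_congr rfl fun j _ => ?_
    rw [hH j m]; ring
  have hlow_symm : ∀ k l m, ∑ i, ∑ j, pd n k (g i j) x' * (H m i * H l j) =
      ∑ i, ∑ j, pd n k (g i j) x' * (H l i * H m j) := by
    intro k l m
    rw [Finset.sum_comm]
    refine Finset.sum_congr rfl fun i _ => Finset.sum_congr rfl fun j _ => ?_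
    rw [pd_congr hU (hgsymm j i) k hx']; ring
  have hc : ∀ (t : Fin n → ℝ) m, ∑ i, ∑ j, G i j * (t i * H m j) = t m := contract hH hGH
  have hc' : ∀ (t : Fin n → ℝ) m, ∑ i, ∑ j, G i j * (H m i * t j) = t m := by
    intro t m
    rw [← hc t m, Finset.sum_comm]
    refine Finset.sum_congr rfl fun i _ => Finset.sum_congr rfl fun j _ => ?_
    rw [hG j i]; ring
  have hT := h3 k l m hx'
  simp only [pd3_mul3 hU (hgsmooth _ _) (hds _) (hds _) hx' (hs0 _) (hs0 _), hHap, hGap,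
    mul_add, Finset.sum_add_distrib] at hT
  simp only [hlow_symm k l m, hlow_symm l k m, hlow_symm m k l,
    hc (fun i => pd n k (pd n l (pd n i s)) x') m, hc' (fun i => pd n k (pd n l (pd n i s)) x') m,
    hc (fun i => pd n k (pd n m (pd n i s)) x') l, hc' (fun i => pd n k (pd n m (pd n i s)) x') l,
    hc (fun i => pd n l (pd n m (pd n i s)) x') k, hc' (fun i => pd n l (pd n m (pd n i s)) x') k]
    at hT
  have p1 : pd n k (pd n m (pd n l s)) x' = pd n k (pd n l (pd n m s)) x' :=
    pd_congr hU (pd_comm hU hsU m l) k hx'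
  have p2 : pd n l (pd n m (pd n k s)) x' = pd n k (pd n l (pd n m s)) x' := by
    rw [pd_congr hU (pd_comm hU hsU m k) l hx', pd_comm hU (hds m) l k hx']
  rw [p1, p2] at hT
  rw [hlow, hlow, hlow]
  change pd n k (pd n l (pd n m s)) x' = _
  linarith
end

section
/- Let ν, ρ : ℕ → ℝ be sequences such that Σ_k (1 + ν_k²) exp(−τ ν_k²) < ∞ and Σ_j (1 + ρ_j²) exp(−τ ρ_j²) < ∞ for every τ > 0, and let a : ℕ × ℕ → ℂ satisfy Σ_j |a_{kj}|² = 1 for every k and Σ_k |a_{kj}|² = 1 for every j. For t, s > 0 define Y(t,s) := Σ_{k,j} |a_{kj}|² ν_k ρ_j exp(−t ν_k² − s ρ_j²). Then all these sums converge absolutely and the relative spectral invariant Φ(t,s) := Σ_{k,j} |a_{kj}|² ( ν_k e^{−t ν_k²} − ρ_j e^{−t ρ_j²} )( ν_k e^{−s ν_k²} − ρ_j e^{−s ρ_j²} ) converges absolutely and satisfies Φ(t,s) = Σ_k ν_k² e^{−(t+s) ν_k²} + Σ_j ρ_j² e^{−(t+s) ρ_j²} − Y(t,s) − Y(s,t).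 -/
/-!
Expanding the product in `Φ(t,s)` gives two diagonal terms `|a_{kj}|² ν_k² e^{-(t+s)ν_k²}` and
`|a_{kj}|² ρ_j² e^{-(t+s)ρ_j²}`, and two cross terms whose sums are `Y(t,s)` and `Y(s,t)`.
Each diagonal term depends on one index only apart from the weight, so Parseval's identity
collapses its double sum to a single one (`hasSum_weight_fst`, `hasSum_weight_snd`).
The cross terms converge absolutely since `|xy| ≤ x² + y²` bounds them by diagonal terms
(`summable_cross`).
-/

open scoped BigOperators

lemma summable_sq_mul_exp {ν : ℕ → ℝ}
    (hν : ∀ τ : ℝ, 0 < τ → Summable fun k => (1 + ν k ^ 2) * Real.exp (-τ * ν k ^ 2))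
    {τ : ℝ} (hτ : 0 < τ) : Summable fun k => ν k ^ 2 * Real.exp (-τ * ν k ^ 2) := by
  refine Summable.of_nonneg_of_le (fun k => by positivity) (fun k => ?_) (hν τ hτ)
  gcongr
  linarith

/-- A nonnegative weight whose rows all sum to `1` disappears when it is summed against a
nonnegative function of the row index. -/
lemma hasSum_weight_fst {w : ℕ → ℕ → ℝ} (hw : ∀ k j, 0 ≤ w k j)
    (h1 : ∀ k, HasSum (w k) 1) {f : ℕ → ℝ} (hf : ∀ k, 0 ≤ f k) (hs : Summable f) :
    HasSum (fun p : ℕ × ℕ => w p.1 p.2 * f p.1) (∑' k, f k) := by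
  have hrow : ∀ k, HasSum (fun j => w k j * f k) (f k) := fun k => by
    simpa using (h1 k).mul_right (f k)
  have hsum : Summable (fun p : ℕ × ℕ => w p.1 p.2 * f p.1) := by
    refine (summable_prod_of_nonneg fun p => mul_nonneg (hw _ _) (hf _)).2
      ⟨fun k => (hrow k).summable, ?_⟩
    simpa only [(hrow _).tsum_eq] using hs
  rw [(hsum.hasSum.prod_fiberwise hrow).tsum_eq]
  exact hsum.hasSum

/-- The column version of `hasSum_weight_fst`. -/
lemma hasSum_weight_snd {w : ℕ → ℕ → ℝ} (hw : ∀ k j, 0 ≤ w k j)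
    (h2 : ∀ j, HasSum (fun k => w k j) 1) {f : ℕ → ℝ} (hf : ∀ j, 0 ≤ f j) (hs : Summable f) :
    HasSum (fun p : ℕ × ℕ => w p.1 p.2 * f p.2) (∑' j, f j) :=
  (Equiv.prodComm ℕ ℕ).hasSum_iff.1
    (hasSum_weight_fst (w := fun j k => w k j) (fun j k => hw k j) h2 hf hs)

lemma summable_cross {w : ℕ → ℕ → ℝ} (hw : ∀ k j, 0 ≤ w k j)
    (h1 : ∀ k, HasSum (w k) 1) (h2 : ∀ j, HasSum (fun k => w k j) 1) {x y : ℕ → ℝ}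
    (hx : Summable fun k => x k ^ 2) (hy : Summable fun j => y j ^ 2) :
    Summable (fun p : ℕ × ℕ => w p.1 p.2 * (x p.1 * y p.2)) := by
  refine Summable.of_norm_bounded
    ((hasSum_weight_fst hw h1 (fun k => sq_nonneg (x k)) hx).summable.add
      (hasSum_weight_snd hw h2 (fun j => sq_nonneg (y j)) hy).summable) (fun p => ?_)
  rw [Real.norm_eq_abs, abs_mul, abs_of_nonneg (hw _ _), ← mul_add]
  refine mul_le_mul_of_nonneg_left (abs_le.2 ⟨?_, ?_⟩) (hw _ _)
  · nlinarith [sq_nonneg (x p.1 + y p.2), sq_nonneg (x p.1), sq_nonneg (y p.2)]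
  · nlinarith [sq_nonneg (x p.1 - y p.2), sq_nonneg (x p.1), sq_nonneg (y p.2)]

/-- Absolute convergence of `Y(t,s)`. -/
lemma summable_Y {ν ρ : ℕ → ℝ}
    (hν : ∀ τ : ℝ, 0 < τ → Summable fun k => (1 + ν k ^ 2) * Real.exp (-τ * ν k ^ 2))
    (hρ : ∀ τ : ℝ, 0 < τ → Summable fun j => (1 + ρ j ^ 2) * Real.exp (-τ * ρ j ^ 2))
    {w : ℕ → ℕ → ℝ} (hw : ∀ k j, 0 ≤ w k j)
    (h1 : ∀ k, HasSum (w k) 1) (h2 : ∀ j, HasSum (fun k => w k j) 1)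
    {t s : ℝ} (ht : 0 < t) (hs : 0 < s) :
    Summable (fun p : ℕ × ℕ =>
      w p.1 p.2 * ν p.1 * ρ p.2 * Real.exp (-t * ν p.1 ^ 2 - s * ρ p.2 ^ 2)) := by
  have sq_eq : ∀ u z : ℝ,
      (z * Real.exp (-u * z ^ 2)) ^ 2 = z ^ 2 * Real.exp (-(2 * u) * z ^ 2) := fun u z => by
    rw [mul_pow, ← Real.exp_nat_mul]
    congr 2
    push_cast
    ring
  have hx : Summable fun k => (ν k * Real.exp (-t * ν k ^ 2)) ^ 2 := by
    simpa only [sq_eq] using summable_sq_mul_exp hν (by positivity : 0 < 2 * t)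
  have hy : Summable fun j => (ρ j * Real.exp (-s * ρ j ^ 2)) ^ 2 := by
    simpa only [sq_eq] using summable_sq_mul_exp hρ (by positivity : 0 < 2 * s)
  refine (summable_cross hw h1 h2 hx hy).congr fun p => ?_
  rw [show -t * ν p.1 ^ 2 - s * ρ p.2 ^ 2 = -t * ν p.1 ^ 2 + -s * ρ p.2 ^ 2 by ring, Real.exp_add]
  ring

/-- The eigenbasis form of the identity
`Φ(t,s) = −∂_tΘ₊(t+s) − ∂_tΘ₋(t+s) − Y(t,s) − Y(s,t)` for the relative spectral invariant
of two Dirac-type operators with eigenvalues `ν_k`, `ρ_j` and overlap coefficients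
`a_{kj}`, together with the absolute convergence of all the sums involved. -/
theorem relative_invariant_Phi (ν ρ : ℕ → ℝ)
    (hν : ∀ τ : ℝ, 0 < τ → Summable fun k => (1 + ν k ^ 2) * Real.exp (-τ * ν k ^ 2))
    (hρ : ∀ τ : ℝ, 0 < τ → Summable fun j => (1 + ρ j ^ 2) * Real.exp (-τ * ρ j ^ 2))
    (a : ℕ → ℕ → ℂ)
    (ha1 : ∀ k, HasSum (fun j => ‖a k j‖ ^ 2) 1)
    (ha2 : ∀ j, HasSum (fun k => ‖a k j‖ ^ 2) 1)
    (t s : ℝ) (ht : 0 < t) (hs : 0 < s) :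
    Summable (fun k : ℕ => ν k ^ 2 * Real.exp (-(t + s) * ν k ^ 2)) ∧
    Summable (fun j : ℕ => ρ j ^ 2 * Real.exp (-(t + s) * ρ j ^ 2)) ∧
    Summable (fun p : ℕ × ℕ =>
      ‖a p.1 p.2‖ ^ 2 * ν p.1 * ρ p.2 *
        Real.exp (-t * ν p.1 ^ 2 - s * ρ p.2 ^ 2)) ∧
    Summable (fun p : ℕ × ℕ =>
      ‖a p.1 p.2‖ ^ 2 * ν p.1 * ρ p.2 *
        Real.exp (-s * ν p.1 ^ 2 - t * ρ p.2 ^ 2)) ∧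
    Summable (fun p : ℕ × ℕ =>
      ‖a p.1 p.2‖ ^ 2 *
        (ν p.1 * Real.exp (-t * ν p.1 ^ 2) - ρ p.2 * Real.exp (-t * ρ p.2 ^ 2)) *
        (ν p.1 * Real.exp (-s * ν p.1 ^ 2) - ρ p.2 * Real.exp (-s * ρ p.2 ^ 2))) ∧
    (∑' p : ℕ × ℕ,
        ‖a p.1 p.2‖ ^ 2 *
          (ν p.1 * Real.exp (-t * ν p.1 ^ 2) - ρ p.2 * Real.exp (-t * ρ p.2 ^ 2)) *
          (ν p.1 * Real.exp (-s * ν p.1 ^ 2) - ρ p.2 * Real.exp (-s * ρ p.2 ^ 2))) =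
      (∑' k : ℕ, ν k ^ 2 * Real.exp (-(t + s) * ν k ^ 2)) +
        (∑' j : ℕ, ρ j ^ 2 * Real.exp (-(t + s) * ρ j ^ 2)) -
        (∑' p : ℕ × ℕ, ‖a p.1 p.2‖ ^ 2 * ν p.1 * ρ p.2 *
          Real.exp (-t * ν p.1 ^ 2 - s * ρ p.2 ^ 2)) -
        (∑' p : ℕ × ℕ, ‖a p.1 p.2‖ ^ 2 * ν p.1 * ρ p.2 *
          Real.exp (-s * ν p.1 ^ 2 - t * ρ p.2 ^ 2)) := by
  have hw : ∀ k j, 0 ≤ ‖a k j‖ ^ 2 := fun k j => by positivity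
  have hN := summable_sq_mul_exp hν (add_pos ht hs)
  have hR := summable_sq_mul_exp hρ (add_pos ht hs)
  have hY := summable_Y hν hρ hw ha1 ha2 ht hs
  have hY' := summable_Y hν hρ hw ha1 ha2 hs ht
  have hN2 := hasSum_weight_fst hw ha1 (fun k => by positivity) hN
  have hR2 := hasSum_weight_snd hw ha2 (fun j => by positivity) hR
  have hΦ := ((hN2.add hR2).sub hY.hasSum).sub hY'.hasSum
  have expand : ∀ p : ℕ × ℕ,
      ‖a p.1 p.2‖ ^ 2 *
        (ν p.1 * Real.exp (-t * ν p.1 ^ 2) - ρ p.2 * Real.exp (-t * ρ p.2 ^ 2)) *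
        (ν p.1 * Real.exp (-s * ν p.1 ^ 2) - ρ p.2 * Real.exp (-s * ρ p.2 ^ 2)) =
      ‖a p.1 p.2‖ ^ 2 * (ν p.1 ^ 2 * Real.exp (-(t + s) * ν p.1 ^ 2)) +
        ‖a p.1 p.2‖ ^ 2 * (ρ p.2 ^ 2 * Real.exp (-(t + s) * ρ p.2 ^ 2)) -
        ‖a p.1 p.2‖ ^ 2 * ν p.1 * ρ p.2 * Real.exp (-t * ν p.1 ^ 2 - s * ρ p.2 ^ 2) -
        ‖a p.1 p.2‖ ^ 2 * ν p.1 * ρ p.2 * Real.exp (-s * ν p.1 ^ 2 - t * ρ p.2 ^ 2) := by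
    intro p
    have e : ∀ x y : ℝ, Real.exp (-t * x - s * y) = Real.exp (-t * x) * Real.exp (-s * y) :=
      fun x y => by rw [← Real.exp_add]; ring_nf
    have e' : ∀ x y : ℝ, Real.exp (-s * x - t * y) = Real.exp (-s * x) * Real.exp (-t * y) :=
      fun x y => by rw [← Real.exp_add]; ring_nf
    have d : ∀ x : ℝ, Real.exp (-(t + s) * x) = Real.exp (-t * x) * Real.exp (-s * x) :=
      fun x => by rw [← Real.exp_add]; ring_nf
    rw [e, e', d, d]
    ring
  simp only [expand]
  exact ⟨hN, hR, hY, hY', hΦ.summable, hΦ.tsum_eq⟩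
end

section
/- For every t > 0, the principal value integral of p tan(p/2) e^{−t p²} over ℝ, with singularities at the odd multiples of π, satisfies the identity (1/(2π)) · p.v. ∫_ℝ p tan(p/2) exp(−t p²) dp = (4π)^{−1/2} t^{−3/2} Σ_{k=1}^{∞} (−1)^{k+1} k exp(−k²/(4t)), and the series on the right converges absolutely. -/
/-!
Put `p = 2πu`. The factor `tan (p/2) = tan (πu)` and the truncated domain are both invariant under
`u ↦ u + 1`, so for fixed `δ > 0` (where `tan` is bounded on the domain) the integral unfolds to one
over `[0, 1]` in which `p exp (-tp²)` is replaced by its periodization (`integral_cutFun`). The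
latter is Mathlib's `oddKernel`, and Poisson summation (`oddKernel_functional_equation`) turns it
into the sine series `∑ 2 n sin (2πnu) exp (-n²/4t)`, up to a constant factor.

Since `|tan x * sin (2nx)| ≤ 2n`, the product of `tan (πu)` with this series is bounded, although
`tan (πu)` has a pole at `u = 1/2`. Hence dominated convergence applies to `δ → 0`
(`tendsto_integral_cutFun`), and the limiting ordinary integral may be computed term by term from
`∫₀¹ tan (πu) sin (2πnu) du = (-1)^(n+1)` for `n ≥ 1` (`integral_tan_mul_sin_succ`).
-/

open scoped Topology
open MeasureTheory Filter

namespace PVTan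

open Real HurwitzZeta

/-! ### The integrals of `tan (πu) sin (2πnu)` over a period -/

/-- The two-term recursion behind both the bound and the integral of `tan x * sin (2nx)`. It fails
at the zeros of `cos`, where `tan` takes the junk value `0`. -/
lemma tan_mul_sin_succ (x : ℝ) (hx : cos x ≠ 0) (n : ℕ) :
    tan x * sin (2 * x * (n + 1 : ℕ)) =
      cos (2 * x * n) - cos (2 * x * (n + 1 : ℕ)) - tan x * sin (2 * x * n) := by
  rw [tan_eq_sin_div_cos]
  have e : 2 * x * ((n + 1 : ℕ) : ℝ) = 2 * x * n + 2 * x := by push_cast; ring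
  rw [e, sin_add, cos_add, sin_two_mul, cos_two_mul]
  field_simp
  linear_combination (2 * cos (2 * x * n) * cos x) * (sin_sq_add_cos_sq x)

lemma abs_tan_mul_sin_le (x : ℝ) (n : ℕ) : |tan x * sin (2 * x * n)| ≤ 2 * n := by
  by_cases hx : cos x = 0
  · rw [tan_eq_sin_div_cos, hx]; simp
  induction n with
  | zero => simp
  | succ n ih =>
    rw [tan_mul_sin_succ x hx]
    have h1 := abs_le.1 (abs_cos_le_one (2 * x * n))
    have h2 := abs_le.1 (abs_cos_le_one (2 * x * (n + 1 : ℕ)))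
    have h3 := abs_le.1 ih
    rw [abs_le]
    push_cast at *
    constructor <;> linarith

lemma measurable_tan_pi_mul : Measurable fun u : ℝ => tan (π * u) := by
  simp_rw [tan_eq_sin_div_cos]
  fun_prop

lemma ae_cos_pi_mul_ne_zero : ∀ᵐ u : ℝ, cos (π * u) ≠ 0 := by
  have hs : {u : ℝ | cos (π * u) = 0} ⊆ Set.range fun k : ℤ => (2 * (k : ℝ) + 1) / 2 := by
    intro u hu
    obtain ⟨k, hk⟩ := cos_eq_zero_iff.1 hu
    refine ⟨k, ?_⟩
    have : π * u = π * ((2 * (k : ℝ) + 1) / 2) := by rw [hk]; ring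
    exact (mul_left_cancel₀ pi_ne_zero this).symm
  have := ((Set.countable_range fun k : ℤ => (2 * (k : ℝ) + 1) / 2).mono hs).measure_zero volume
  rw [ae_iff]
  simpa using this

lemma intervalIntegrable_of_bounded {f : ℝ → ℝ} (hf : Measurable f) (C : ℝ)
    (hC : ∀ u, |f u| ≤ C) : IntervalIntegrable f volume 0 1 := by
  refine (intervalIntegrable_const (c := C)).mono_fun hf.aestronglyMeasurable
    (ae_of_all _ fun u => ?_)
  exact (hC u).trans (le_abs_self C)

lemma intervalIntegrable_tan_mul_sin (n : ℕ) :
    IntervalIntegrable (fun u : ℝ => tan (π * u) * sin (2 * (π * u) * n)) volume 0 1 :=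
  intervalIntegrable_of_bounded (measurable_tan_pi_mul.mul (by fun_prop)) (2 * n)
    fun u => abs_tan_mul_sin_le (π * u) n

lemma integral_cos_succ (n : ℕ) : ∫ u in (0 : ℝ)..1, cos (2 * (π * u) * (n + 1 : ℕ)) = 0 := by
  have hn : (2 * π * (n + 1 : ℕ) : ℝ) ≠ 0 := by positivity
  have e : ∀ u : ℝ, 2 * (π * u) * (n + 1 : ℕ) = (2 * π * (n + 1 : ℕ)) * u := fun u => by ring
  simp_rw [e]
  rw [intervalIntegral.integral_comp_mul_left _ hn, integral_cos]
  have : sin (2 * π * (n + 1 : ℕ) * 1) = 0 := by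
    have := sin_nat_mul_pi (2 * (n + 1))
    rw [← this]; congr 1; push_cast; ring
  rw [this]; simp

lemma integral_tan_mul_sin_succ (n : ℕ) :
    ∫ u in (0 : ℝ)..1, tan (π * u) * sin (2 * (π * u) * (n + 1 : ℕ)) = (-1) ^ n := by
  have hc : ∀ k : ℕ, IntervalIntegrable (fun u : ℝ => cos (2 * (π * u) * k)) volume 0 1 :=
    fun k => Continuous.intervalIntegrable (by fun_prop) _ _
  have key : ∀ n : ℕ, ∫ u in (0 : ℝ)..1, tan (π * u) * sin (2 * (π * u) * (n + 1 : ℕ)) =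
      (∫ u in (0 : ℝ)..1, cos (2 * (π * u) * n)) -
        ∫ u in (0 : ℝ)..1, tan (π * u) * sin (2 * (π * u) * n) := by
    intro n
    rw [intervalIntegral.integral_congr_ae (g := fun u => cos (2 * (π * u) * n) -
      cos (2 * (π * u) * (n + 1 : ℕ)) - tan (π * u) * sin (2 * (π * u) * n))]
    · rw [intervalIntegral.integral_sub ((hc n).sub (hc _)) (intervalIntegrable_tan_mul_sin n),
        intervalIntegral.integral_sub (hc n) (hc _), integral_cos_succ, sub_zero]
    · filter_upwards [ae_cos_pi_mul_ne_zero] with u hu _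
      exact tan_mul_sin_succ (π * u) hu n
  induction n with
  | zero => rw [key]; simp
  | succ n ih => rw [key, ih, integral_cos_succ, pow_succ]; ring

/-! ### The periodized Gaussian -/

lemma summable_pow_mul_exp (t : ℝ) (ht : 0 < t) (k : ℕ) :
    Summable fun n : ℕ => (n : ℝ) ^ k * exp (-(n : ℝ) ^ 2 / (4 * t)) := by
  have h := HurwitzKernelBounds.summable_f_nat k 0 (t := 1 / (4 * π * t)) (by positivity)
  refine h.congr fun n => ?_
  simp only [HurwitzKernelBounds.f_nat, add_zero]
  congr 2
  field_simp

/-- Poisson summation for `v ↦ v * exp (-4π²t v²)`, multiplied by `tan (πu)`. -/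
lemma hasSum_tan_mul_oddKernel (t : ℝ) (ht : 0 < t) (u : ℝ) :
    HasSum (fun n : ℕ => 2 / (4 * π * t) ^ (3 / 2 : ℝ) * (n * exp (-(n : ℝ) ^ 2 / (4 * t))) *
      (tan (π * u) * sin (2 * (π * u) * n)))
      (tan (π * u) * oddKernel (u : UnitAddCircle) (4 * π * t)) := by
  have h := ((hasSum_nat_sinKernel u (t := 1 / (4 * π * t)) (by positivity)).mul_left
    (1 / (4 * π * t) ^ (3 / 2 : ℝ))).mul_left (tan (π * u))
  rw [← oddKernel_functional_equation] at h
  refine h.congr_fun fun n => ?_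
  have e1 : 2 * π * u * (n : ℝ) = 2 * (π * u) * n := by ring
  have e2 : -π * (n : ℝ) ^ 2 * (1 / (4 * π * t)) = -(n : ℝ) ^ 2 / (4 * t) := by field_simp
  rw [e1, e2]
  ring

lemma norm_term_le (t : ℝ) (ht : 0 < t) (u : ℝ) (n : ℕ) :
    ‖2 / (4 * π * t) ^ (3 / 2 : ℝ) * (n * exp (-(n : ℝ) ^ 2 / (4 * t))) *
      (tan (π * u) * sin (2 * (π * u) * n))‖ ≤
    4 / (4 * π * t) ^ (3 / 2 : ℝ) * ((n : ℝ) ^ 2 * exp (-(n : ℝ) ^ 2 / (4 * t))) := by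
  have h := abs_tan_mul_sin_le (π * u) n
  have hc : 0 ≤ 2 / (4 * π * t) ^ (3 / 2 : ℝ) * (n * exp (-(n : ℝ) ^ 2 / (4 * t))) := by
    positivity
  rw [norm_mul, norm_of_nonneg hc, norm_eq_abs]
  refine (mul_le_mul_of_nonneg_left h hc).trans_eq ?_
  ring

lemma summable_bound (t : ℝ) (ht : 0 < t) : Summable fun n : ℕ =>
    4 / (4 * π * t) ^ (3 / 2 : ℝ) * ((n : ℝ) ^ 2 * exp (-(n : ℝ) ^ 2 / (4 * t))) :=
  (summable_pow_mul_exp t ht 2).mul_left _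

/-- Although `tan (πu)` is unbounded, its product with the odd periodized Gaussian is bounded: the
latter vanishes at `u = 1/2`. -/
lemma norm_tan_mul_oddKernel_le (t : ℝ) (ht : 0 < t) (u : ℝ) :
    ‖tan (π * u) * oddKernel (u : UnitAddCircle) (4 * π * t)‖ ≤
      ∑' n : ℕ, 4 / (4 * π * t) ^ (3 / 2 : ℝ) *
        ((n : ℝ) ^ 2 * exp (-(n : ℝ) ^ 2 / (4 * t))) := by
  rw [← (hasSum_tan_mul_oddKernel t ht u).tsum_eq]
  exact tsum_of_norm_bounded (summable_bound t ht).hasSum (norm_term_le t ht u)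

lemma measurable_tan_mul_oddKernel (t : ℝ) (ht : 0 < t) :
    Measurable fun u : ℝ => tan (π * u) * oddKernel (u : UnitAddCircle) (4 * π * t) := by
  refine measurable_of_tendsto_metrizable (f := fun (N : ℕ) (u : ℝ) => ∑ n ∈ Finset.range N,
    2 / (4 * π * t) ^ (3 / 2 : ℝ) * (n * exp (-(n : ℝ) ^ 2 / (4 * t))) *
      (tan (π * u) * sin (2 * (π * u) * n))) (fun N => ?_) ?_
  · refine Finset.measurable_fun_sum _ fun n _ => ?_
    exact (measurable_tan_pi_mul.mul (by fun_prop)).const_mul _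
  · exact tendsto_pi_nhds.2 fun u => (hasSum_tan_mul_oddKernel t ht u).tendsto_sum_nat

lemma integral_tan_mul_oddKernel (t : ℝ) (ht : 0 < t) :
    ∫ u in (0 : ℝ)..1, tan (π * u) * oddKernel (u : UnitAddCircle) (4 * π * t) =
      2 / (4 * π * t) ^ (3 / 2 : ℝ) * ∑' k : ℕ,
        (-1 : ℝ) ^ k * ((k : ℝ) + 1) * exp (-((k : ℝ) + 1) ^ 2 / (4 * t)) := by
  have h := intervalIntegral.hasSum_integral_of_dominated_convergence (μ := volume)
    (a := 0) (b := 1)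
    (F := fun (n : ℕ) (u : ℝ) => 2 / (4 * π * t) ^ (3 / 2 : ℝ) *
      (n * exp (-(n : ℝ) ^ 2 / (4 * t))) * (tan (π * u) * sin (2 * (π * u) * n)))
    (f := fun u : ℝ => tan (π * u) * oddKernel (u : UnitAddCircle) (4 * π * t))
    (fun n _ => 4 / (4 * π * t) ^ (3 / 2 : ℝ) * ((n : ℝ) ^ 2 * exp (-(n : ℝ) ^ 2 / (4 * t))))
    (fun n => ((measurable_tan_pi_mul.mul
      (by fun_prop)).const_mul _).aestronglyMeasurable)
    (fun n => ae_of_all _ fun u _ => norm_term_le t ht u n)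
    (ae_of_all _ fun u _ => summable_bound t ht)
    intervalIntegrable_const
    (ae_of_all _ fun u _ => hasSum_tan_mul_oddKernel t ht u)
  rw [← h.tsum_eq, h.summable.tsum_eq_zero_add, ← tsum_mul_left]
  simp_rw [intervalIntegral.integral_const_mul, integral_tan_mul_sin_succ]
  simp only [Nat.cast_zero, zero_mul, mul_zero, zero_add]
  refine tsum_congr fun k => ?_
  push_cast
  ring

/-! ### Unfolding the truncated integral -/

/-- The integration domain in the variable `u = p / 2π`. -/
def cutSet (δ : ℝ) : Set ℝ := {u | ∀ m : ℤ, δ ≤ |2 * π * u - (2 * (m : ℝ) + 1) * π|}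

lemma measurableSet_cutSet (δ : ℝ) : MeasurableSet (cutSet δ) := by
  have : cutSet δ = ⋂ m : ℤ, {u | δ ≤ |2 * π * u - (2 * (m : ℝ) + 1) * π|} := by
    ext u; simp [cutSet]
  rw [this]
  exact MeasurableSet.iInter fun m => measurableSet_le (by fun_prop) (by fun_prop)

lemma add_int_mem_cutSet (δ u : ℝ) (n : ℤ) : u + n ∈ cutSet δ ↔ u ∈ cutSet δ := by
  constructor
  · intro h m
    have := h (m + n)
    push_cast at this
    convert this using 2
    ring
  · intro h m
    have := h (m - n)
    push_cast at this
    convert this using 2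
    ring

lemma abs_tan_le_of_mem_cutSet {δ u : ℝ} (hδ : 0 < δ) (hu : u ∈ cutSet δ) :
    |tan (π * u)| ≤ π / δ := by
  have hpi := pi_pos
  -- `u = m + 1/2 + v` with `|v| ≤ 1/2`, so that `|cos (πu)| = |sin (πv)| ≥ 2|v| ≥ δ / π`.
  set m : ℤ := round (u - 1 / 2) with hm
  set v : ℝ := u - 1 / 2 - m with hv
  have hv2 : |v| ≤ 1 / 2 := abs_sub_round (u - 1 / 2)
  have hδv : δ ≤ 2 * π * |v| := by
    have := hu m
    have e : 2 * π * u - (2 * (m : ℝ) + 1) * π = 2 * π * v := by rw [hv]; ring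
    rwa [e, abs_mul, abs_of_pos (by positivity : 0 < 2 * π)] at this
  have hcos : |cos (π * u)| = |sin (π * v)| := by
    have e : π * u = π * v + π / 2 + m * π := by rw [hv]; ring
    rw [e, cos_add_int_mul_pi, cos_add_pi_div_two, abs_mul, abs_neg]
    rcases Int.even_or_odd m with h | h
    · simp [h.neg_one_zpow]
    · simp [h.neg_one_zpow]
  have hsin : δ / π ≤ |sin (π * v)| := by
    have h1 : 2 / π * (π * |v|) ≤ sin (π * |v|) :=
      mul_le_sin (by positivity) (by nlinarith)
    have h2 : sin (π * |v|) ≤ |sin (π * v)| := by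
      rcases abs_cases v with ⟨h, _⟩ | ⟨h, _⟩
      · rw [h]; exact le_abs_self _
      · rw [h, mul_neg, sin_neg]; exact neg_le_abs _
    refine le_trans ?_ (h1.trans h2)
    rw [div_le_iff₀ hpi]
    have : 2 / π * (π * |v|) * π = 2 * π * |v| := by field_simp
    linarith
  have hpos : 0 < δ / π := by positivity
  rw [tan_eq_sin_div_cos, abs_div, hcos]
  calc |sin (π * u)| / |sin (π * v)| ≤ 1 / (δ / π) :=
        div_le_div₀ zero_le_one (abs_sin_le_one _) hpos hsin
    _ = π / δ := by rw [one_div_div]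

/-- The integrand in the variable `u = p / 2π`, extended by zero from `cutSet δ`. -/
noncomputable def cutFun (t δ u : ℝ) : ℝ :=
  (cutSet δ).indicator
    (fun u => 2 * π * u * tan (2 * π * u / 2) * exp (-t * (2 * π * u) ^ 2)) u

lemma cutFun_eq (t δ u : ℝ) : cutFun t δ u =
    (cutSet δ).indicator (fun u => tan (π * u)) u *
      (2 * π * (u * exp (-(4 * π ^ 2 * t) * u ^ 2))) := by
  have e1 : 2 * π * u / 2 = π * u := by ring
  have e2 : -t * (2 * π * u) ^ 2 = -(4 * π ^ 2 * t) * u ^ 2 := by ring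
  by_cases hu : u ∈ cutSet δ
  · simp only [cutFun, Set.indicator_of_mem hu, e1, e2]; ring
  · simp [cutFun, Set.indicator_of_notMem hu]

lemma integrable_cutFun (t : ℝ) (ht : 0 < t) {δ : ℝ} (hδ : 0 < δ) :
    Integrable (cutFun t δ) := by
  have hg : Integrable fun u : ℝ => 2 * π * (u * exp (-(4 * π ^ 2 * t) * u ^ 2)) :=
    (integrable_mul_exp_neg_mul_sq (by positivity)).const_mul _
  have := hg.bdd_mul (f := (cutSet δ).indicator fun u => tan (π * u)) (c := π / δ)
    (measurable_tan_pi_mul.indicator (measurableSet_cutSet δ)).aestronglyMeasurable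
    (ae_of_all _ fun u => ?_)
  · exact this.congr (ae_of_all _ fun u => (cutFun_eq t δ u).symm)
  · by_cases hu : u ∈ cutSet δ
    · rw [Set.indicator_of_mem hu]; exact abs_tan_le_of_mem_cutSet hδ hu
    · rw [Set.indicator_of_notMem hu, norm_zero]; positivity

lemma hasSum_cutFun (t : ℝ) (ht : 0 < t) (δ u : ℝ) :
    HasSum (fun n : ℤ => cutFun t δ (u + n)) ((cutSet δ).indicator
      (fun u => 2 * π * (tan (π * u) * oddKernel (u : UnitAddCircle) (4 * π * t))) u) := by
  by_cases hu : u ∈ cutSet δ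
  · rw [Set.indicator_of_mem hu]
    have h := ((hasSum_int_oddKernel u (x := 4 * π * t) (by positivity)).mul_left
      (tan (π * u))).mul_left (2 * π)
    refine h.congr_fun fun n => ?_
    have e : π * (u + n) = π * u + n * π := by ring
    have e2 : -(4 * π ^ 2 * t) * (u + n) ^ 2 = -π * (n + u) ^ 2 * (4 * π * t) := by ring
    rw [cutFun_eq, Set.indicator_of_mem ((add_int_mem_cutSet δ u n).2 hu), e,
      tan_add_int_mul_pi, e2]
    ring
  · rw [Set.indicator_of_notMem hu]
    have : (fun n : ℤ => cutFun t δ (u + n)) = fun _ => 0 := by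
      funext n
      exact Set.indicator_of_notMem (fun h => hu ((add_int_mem_cutSet δ u n).1 h)) _
    rw [this]
    exact hasSum_zero

lemma integral_cutFun (t : ℝ) (ht : 0 < t) {δ : ℝ} (hδ : 0 < δ) :
    ∫ u, cutFun t δ u = ∫ u in (0 : ℝ)..1, (cutSet δ).indicator
      (fun u => 2 * π * (tan (π * u) * oddKernel (u : UnitAddCircle) (4 * π * t))) u := by
  have hI := integrable_cutFun t ht hδ
  have h1 := hI.hasSum_intervalIntegral_comp_add_int
  have h2 := hI.norm.hasSum_intervalIntegral_comp_add_int.summable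
  simp only [intervalIntegral.integral_of_le zero_le_one] at h1 h2 ⊢
  have h3 := hasSum_integral_of_summable_integral_norm
    (μ := volume.restrict (Set.Ioc (0 : ℝ) 1)) (F := fun (n : ℤ) u => cutFun t δ (u + n))
    (fun n => (hI.comp_add_right (n : ℝ)).restrict) h2
  rw [h1.unique h3]
  refine integral_congr_ae (ae_of_all _ fun u => ?_)
  exact (hasSum_cutFun t ht δ u).tsum_eq

lemma setIntegral_eq_cutFun (t δ : ℝ) :
    ∫ p in {p : ℝ | ∀ m : ℤ, δ ≤ |p - (2 * (m : ℝ) + 1) * π|},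
      p * tan (p / 2) * exp (-t * p ^ 2) = 2 * π * ∫ u, cutFun t δ u := by
  have hm : MeasurableSet {p : ℝ | ∀ m : ℤ, δ ≤ |p - (2 * (m : ℝ) + 1) * π|} := by
    have : {p : ℝ | ∀ m : ℤ, δ ≤ |p - (2 * (m : ℝ) + 1) * π|} =
        ⋂ m : ℤ, {p | δ ≤ |p - (2 * (m : ℝ) + 1) * π|} := by
      ext u; simp
    rw [this]
    exact MeasurableSet.iInter fun m => measurableSet_le (by fun_prop) (by fun_prop)
  rw [← integral_indicator hm]
  have h := Measure.integral_comp_mul_left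
    ({p : ℝ | ∀ m : ℤ, δ ≤ |p - (2 * (m : ℝ) + 1) * π|}.indicator
      fun p => p * tan (p / 2) * exp (-t * p ^ 2)) (2 * π)
  have hpi : 0 < 2 * π := by positivity
  rw [abs_of_pos (inv_pos.2 hpi), smul_eq_mul] at h
  have e : ∫ u, cutFun t δ u = ∫ u, {p : ℝ | ∀ m : ℤ, δ ≤ |p - (2 * (m : ℝ) + 1) * π|}.indicator
      (fun p => p * tan (p / 2) * exp (-t * p ^ 2)) (2 * π * u) := rfl
  rw [e, h, mul_inv_cancel_left₀ hpi.ne']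

lemma eventually_mem_cutSet {u : ℝ} (hu : cos (π * u) ≠ 0) :
    ∀ᶠ δ in 𝓝[>] (0 : ℝ), u ∈ cutSet δ := by
  have hpi := pi_pos
  set m : ℤ := round (u - 1 / 2) with hm
  have hne : 0 < |u - 1 / 2 - m| := by
    rw [abs_pos]
    intro h
    refine hu (cos_eq_zero_iff.2 ⟨m, ?_⟩)
    linear_combination π * h
  have hpos : 0 < 2 * π * |u - 1 / 2 - m| := by positivity
  filter_upwards [Ioo_mem_nhdsGT hpos] with δ hδ k
  have e : 2 * π * u - (2 * (k : ℝ) + 1) * π = 2 * π * (u - 1 / 2 - k) := by ring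
  rw [e, abs_mul, abs_of_pos (by positivity : 0 < 2 * π)]
  have := round_le (u - 1 / 2) k
  exact hδ.2.le.trans (mul_le_mul_of_nonneg_left this (by positivity))

lemma tendsto_integral_cutFun (t : ℝ) (ht : 0 < t) :
    Tendsto (fun δ => ∫ u, cutFun t δ u) (𝓝[>] (0 : ℝ))
      (𝓝 (∫ u in (0 : ℝ)..1,
        2 * π * (tan (π * u) * oddKernel (u : UnitAddCircle) (4 * π * t)))) := by
  have hK := (measurable_tan_mul_oddKernel t ht).const_mul (2 * π)
  have h : Tendsto (fun δ => ∫ u in (0 : ℝ)..1, (cutSet δ).indicator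
      (fun u => 2 * π * (tan (π * u) * oddKernel (u : UnitAddCircle) (4 * π * t))) u)
      (𝓝[>] (0 : ℝ)) (𝓝 (∫ u in (0 : ℝ)..1,
        2 * π * (tan (π * u) * oddKernel (u : UnitAddCircle) (4 * π * t)))) := by
    refine intervalIntegral.tendsto_integral_filter_of_dominated_convergence
      (fun _ => 2 * π * ∑' n : ℕ, 4 / (4 * π * t) ^ (3 / 2 : ℝ) *
        ((n : ℝ) ^ 2 * exp (-(n : ℝ) ^ 2 / (4 * t)))) ?_ ?_ intervalIntegrable_const ?_
    · exact Eventually.of_forall fun δ =>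
        (hK.indicator (measurableSet_cutSet δ)).aestronglyMeasurable
    · refine Eventually.of_forall fun δ => ae_of_all _ fun u _ => ?_
      refine (norm_indicator_le_norm_self _ u).trans ?_
      rw [norm_mul, norm_of_nonneg (by positivity : 0 ≤ 2 * π)]
      exact mul_le_mul_of_nonneg_left (norm_tan_mul_oddKernel_le t ht u) (by positivity)
    · filter_upwards [ae_cos_pi_mul_ne_zero] with u hu _
      refine tendsto_const_nhds.congr' ?_
      filter_upwards [eventually_mem_cutSet hu] with δ hδ
      rw [Set.indicator_of_mem hδ]
  refine h.congr' ?_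
  filter_upwards [self_mem_nhdsWithin] with δ hδ
  exact (integral_cutFun t ht hδ).symm

lemma constant_eq (t : ℝ) (ht : 0 < t) :
    2 * π * (2 / (4 * π * t) ^ (3 / 2 : ℝ)) = (4 * π) ^ (-(1 : ℝ) / 2) * t ^ (-(3 : ℝ) / 2) := by
  have hp : 0 < 4 * π := by positivity
  rw [mul_rpow hp.le ht.le]
  have e1 : (4 * π) ^ (3 / 2 : ℝ) = 4 * π * (4 * π) ^ (1 / 2 : ℝ) := by
    rw [show (3 / 2 : ℝ) = 1 + 1 / 2 by norm_num, rpow_add hp, rpow_one]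
  rw [show (-(1 : ℝ) / 2) = -(1 / 2) by norm_num, show (-(3 : ℝ) / 2) = -(3 / 2) by norm_num,
    rpow_neg hp.le, rpow_neg ht.le, e1]
  have : (4 * π) ^ (1 / 2 : ℝ) ≠ 0 := by positivity
  have : t ^ (3 / 2 : ℝ) ≠ 0 := by positivity
  field_simp
  norm_num

end PVTan

/-- The principal value integral
`(1/2π) p.v. ∫_ℝ p tan(p/2) e^{−tp²} dp = (4π)^{−1/2} t^{−3/2} Σ_{k≥1} (−1)^{k+1} k e^{−k²/4t}`,
the principal value being the limit, as `δ → 0⁺`, of the integral over `ℝ` with the open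
intervals of radius `δ` around the singular points `(2m+1)π`, `m ∈ ℤ`, removed; the series
on the right converges absolutely. -/
theorem pv_tan_integral (t : ℝ) (ht : 0 < t) :
    Summable (fun k : ℕ =>
      (-1 : ℝ) ^ k * ((k : ℝ) + 1) * Real.exp (-((k : ℝ) + 1) ^ 2 / (4 * t))) ∧
    Tendsto
      (fun δ : ℝ => (1 / (2 * Real.pi)) *
        ∫ p in {p : ℝ | ∀ m : ℤ, δ ≤ |p - (2 * (m : ℝ) + 1) * Real.pi|},
          p * Real.tan (p / 2) * Real.exp (-t * p ^ 2))
      (𝓝[>] (0 : ℝ))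
      (𝓝 ((4 * Real.pi) ^ (-(1 : ℝ) / 2) * t ^ (-(3 : ℝ) / 2) *
        ∑' k : ℕ,
          (-1 : ℝ) ^ k * ((k : ℝ) + 1) * Real.exp (-((k : ℝ) + 1) ^ 2 / (4 * t)))) := by
  constructor
  · rw [← summable_norm_iff]
    refine ((summable_nat_add_iff 1).2 (PVTan.summable_pow_mul_exp t ht 1)).congr fun k => ?_
    have hk : (0 : ℝ) ≤ (k : ℝ) + 1 := by positivity
    simp [abs_of_nonneg hk]
  · have h := PVTan.tendsto_integral_cutFun t ht
    rw [intervalIntegral.integral_const_mul, PVTan.integral_tan_mul_oddKernel t ht, ← mul_assoc,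
      PVTan.constant_eq t ht] at h
    refine h.congr fun δ => ?_
    rw [PVTan.setIntegral_eq_cutFun, ← mul_assoc, one_div,
      inv_mul_cancel₀ (by positivity : 2 * Real.pi ≠ 0), one_mul]
end

section
/- For every t > 0, the principal value integral of p cot(p/2) e^{−t p²} over ℝ, with singularities at the nonzero multiples of 2π, satisfies the identity (1/(2π)) · p.v. ∫_ℝ p cot(p/2) exp(−t p²) dp = (4π)^{−1/2} t^{−3/2} Σ_{k=1}^{∞} k exp(−k²/(4t)), and the series on the right converges absolutely. (At p = 0 the integrand extends continuously with value 2.) -/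
/-!
Substituting `p = 2πa`, the claim concerns `∫ a cot(πa) exp(-πxa²) da` with `x = 4πt`. Removing
also the interval `(-ε, ε)` changes the integral by at most `ε`, since the integrand is bounded
near `0`. The domain is then invariant under integer translations and so is `cot(πa)`, so the
integral equals that of `cot(πa) ∑ₙ (a + n) exp(-πx(a + n)²)` over the part of `[0, 1]` at distance
at least `ε` from the integers. The functional equation of the odd theta kernel
(`HurwitzZeta.oddKernel_functional_equation`, i.e. Poisson summation) turns the periodized factor
into the sine series `x^(-3/2) ∑ₙ 2n exp(-πn²/x) sin(2πna)`; see `hasSum_truncated`.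

The products `cot(πa) sin(2πna)` are bounded by `2n`, so the singularities have disappeared:
dominated convergence lets `ε → 0` in each term and in the sum, and
`∫₀¹ cot(πa) sin(2πna) da = 1` for `n ≥ 1` (`integral_cotPi_mul_sin`).
-/

open scoped Topology
open MeasureTheory Filter

namespace PVCot

/-- The cotangent `cot (π a)`, in the form `cos / sin` (value `0` at the integers). -/
noncomputable def cotPi (a : ℝ) : ℝ := Real.cos (Real.pi * a) / Real.sin (Real.pi * a)

/-- The points at distance at least `ε` from every integer. -/
def awayInt (ε : ℝ) : Set ℝ := {a : ℝ | ∀ m : ℤ, ε ≤ |a - m|}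

/-- The integrand after the substitution `p = 2 π a`, up to a factor `2 π`, with `x = 4 π t`. -/
noncomputable def integrand (x a : ℝ) : ℝ := a * cotPi a * Real.exp (-Real.pi * a ^ 2 * x)

/-! ### Measurability and periodicity -/

lemma measurable_cotPi : Measurable cotPi := by
  unfold cotPi; fun_prop

lemma measurable_integrand (x : ℝ) : Measurable (integrand x) := by
  have := measurable_cotPi
  unfold integrand; fun_prop

lemma measurableSet_awayInt (ε : ℝ) : MeasurableSet (awayInt ε) := by
  have : awayInt ε = ⋂ m : ℤ, {a : ℝ | ε ≤ |a - m|} := by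
    ext a; simp [awayInt]
  rw [this]
  exact MeasurableSet.iInter fun m => measurableSet_le measurable_const (by fun_prop)

lemma cotPi_add_int (a : ℝ) (n : ℤ) : cotPi (a + n) = cotPi a := by
  have e : Real.pi * (a + n) = Real.pi * a + n * Real.pi := by ring
  have hn : ((-1 : ℝ) ^ n) ≠ 0 := zpow_ne_zero _ (by norm_num)
  unfold cotPi
  rw [e, Real.cos_add_int_mul_pi, Real.sin_add_int_mul_pi, mul_div_mul_left _ _ hn]

lemma add_int_mem_awayInt (ε a : ℝ) (n : ℤ) : a + n ∈ awayInt ε ↔ a ∈ awayInt ε := by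
  constructor
  · intro h m
    have := h (m + n)
    push_cast at this
    rwa [add_sub_add_right_eq_sub] at this
  · intro h m
    have := h (m - n)
    push_cast at this
    rwa [show a - ((m : ℝ) - n) = a + n - m by ring] at this

/-! ### Sine coefficients of the cotangent -/

lemma abs_sin_nat_mul_le (n : ℕ) (y : ℝ) : |Real.sin (n * y)| ≤ n * |Real.sin y| := by
  induction n with
  | zero => simp
  | succ k ih =>
    have e : ((k + 1 : ℕ) : ℝ) * y = k * y + y := by push_cast; ring
    rw [e, Real.sin_add]
    refine (abs_add_le _ _).trans ?_
    rw [abs_mul, abs_mul]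
    have h1 := Real.abs_cos_le_one y
    have h2 := Real.abs_cos_le_one (k * y)
    push_cast
    nlinarith [abs_nonneg (Real.sin y), abs_nonneg (Real.sin (k * y))]

lemma abs_cotPi_mul_sin_le (n : ℕ) (a : ℝ) :
    |cotPi a * Real.sin (2 * Real.pi * a * n)| ≤ 2 * n := by
  have h := abs_sin_nat_mul_le (2 * n) (Real.pi * a)
  have e : ((2 * n : ℕ) : ℝ) * (Real.pi * a) = 2 * Real.pi * a * n := by push_cast; ring
  rw [e] at h
  push_cast at h
  unfold cotPi
  rw [abs_mul, abs_div]
  rcases eq_or_ne (Real.sin (Real.pi * a)) 0 with h0 | h0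
  · simp [h0]
  · have hs : 0 < |Real.sin (Real.pi * a)| := abs_pos.mpr h0
    rw [div_mul_eq_mul_div, div_le_iff₀ hs]
    have h1 := Real.abs_cos_le_one (Real.pi * a)
    nlinarith [abs_nonneg (Real.sin (2 * Real.pi * a * n))]

lemma intervalIntegrable_cotPi_mul_sin (n : ℕ) :
    IntervalIntegrable (fun a => cotPi a * Real.sin (2 * Real.pi * a * n)) volume 0 1 := by
  refine (intervalIntegrable_const (c := (2 * n : ℝ))).mono_fun ?_ ?_
  · have := measurable_cotPi
    exact Measurable.aestronglyMeasurable (by fun_prop)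
  · refine Eventually.of_forall fun a => ?_
    simpa [abs_mul] using abs_cotPi_mul_sin_le n a

lemma integral_cos_two_pi (n : ℕ) :
    ∫ a in (0 : ℝ)..1, Real.cos (2 * Real.pi * a * n) = if n = 0 then 1 else 0 := by
  split_ifs with h
  · simp [h]
  · have hn : (n : ℝ) ≠ 0 := by exact_mod_cast h
    have hc : 2 * Real.pi * n ≠ 0 := by positivity
    have e : ∀ a : ℝ, 2 * Real.pi * a * n = (2 * Real.pi * n) * a := fun a => by ring
    simp_rw [e]
    rw [intervalIntegral.integral_comp_mul_left (fun y => Real.cos y) hc, integral_cos]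
    have : Real.sin (2 * Real.pi * n * 1) = 0 := by
      rw [show 2 * Real.pi * n * 1 = ((2 * n : ℕ) : ℝ) * Real.pi by push_cast; ring]
      exact Real.sin_nat_mul_pi _
    rw [this]; simp

/-- Telescoping: `cot y (sin (2n+2)y - sin 2ny) = cos (2n+2)y + cos 2ny`. -/
lemma integral_cotPi_mul_sin (n : ℕ) :
    ∫ a in (0 : ℝ)..1, cotPi a * Real.sin (2 * Real.pi * a * n) = if n = 0 then 0 else 1 := by
  induction n with
  | zero => simp
  | succ k ih =>
    have key : ∫ a in (0 : ℝ)..1, (cotPi a * Real.sin (2 * Real.pi * a * (k + 1 : ℕ))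
        - cotPi a * Real.sin (2 * Real.pi * a * k)) =
        ∫ a in (0 : ℝ)..1, (Real.cos (2 * Real.pi * a * (k + 1 : ℕ))
          + Real.cos (2 * Real.pi * a * k)) := by
      refine intervalIntegral.integral_congr_Ioo_of_le zero_le_one fun a ha => ?_
      have hs : Real.sin (Real.pi * a) ≠ 0 := by
        refine (Real.sin_pos_of_pos_of_lt_pi (mul_pos Real.pi_pos ha.1) ?_).ne'
        nlinarith [Real.pi_pos, ha.2]
      have e : 2 * Real.pi * a * ((k + 1 : ℕ) : ℝ)
          = 2 * Real.pi * a * k + Real.pi * a + Real.pi * a := by push_cast; ring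
      have e' : 2 * Real.pi * a * k = (2 * Real.pi * a * k + Real.pi * a) - Real.pi * a := by ring
      simp only [e]
      set z := 2 * Real.pi * a * k + Real.pi * a with hz
      rw [e']
      simp only [cotPi, Real.sin_add, Real.sin_sub, Real.cos_add, Real.cos_sub]
      field_simp
      ring
    rw [intervalIntegral.integral_sub (intervalIntegrable_cotPi_mul_sin _)
      (intervalIntegrable_cotPi_mul_sin _), intervalIntegral.integral_add
      (Continuous.intervalIntegrable (by fun_prop) _ _)
      (Continuous.intervalIntegrable (by fun_prop) _ _), integral_cos_two_pi,
      integral_cos_two_pi, ih] at key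
    rcases eq_or_ne k 0 with h | h
    · simp [h] at key ⊢; linarith
    · simp [h] at key ⊢; linarith

/-! ### Integrability away from the integers and periodization -/

lemma two_mul_le_abs_sin {ε a : ℝ} (h : a ∈ awayInt ε) : 2 * ε ≤ |Real.sin (Real.pi * a)| := by
  have h1 := h (round a)
  have h2 := abs_sub_round a
  have hp := Real.pi_pos
  have h3 : |Real.pi * (a - round a)| ≤ Real.pi / 2 := by
    rw [abs_mul, abs_of_pos hp]; nlinarith
  have h4 := Real.mul_abs_le_abs_sin h3
  have e : Real.pi * (a - round a) = Real.pi * a - round a * Real.pi := by ring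
  have h5 : |Real.sin (Real.pi * (a - round a))| = |Real.sin (Real.pi * a)| := by
    rw [e, Real.sin_sub_int_mul_pi, abs_mul, abs_zpow]; simp
  rw [h5, abs_mul, abs_of_pos hp] at h4
  have : 2 / Real.pi * (Real.pi * |a - round a|) = 2 * |a - round a| := by field_simp
  linarith

lemma abs_cotPi_le {ε a : ℝ} (hε : 0 < ε) (h : a ∈ awayInt ε) : |cotPi a| ≤ 1 / (2 * ε) := by
  unfold cotPi
  rw [abs_div]
  have := two_mul_le_abs_sin h
  exact div_le_div₀ zero_le_one (Real.abs_cos_le_one _) (by positivity) this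

lemma integrableOn_awayInt {ε x : ℝ} (hε : 0 < ε) (hx : 0 < x) :
    IntegrableOn (integrand x) (awayInt ε) := by
  have h0 : Integrable fun a : ℝ => 1 / (2 * ε) * (a * Real.exp (-(Real.pi * x) * a ^ 2)) :=
    (integrable_mul_exp_neg_mul_sq (by positivity)).const_mul _
  refine Integrable.mono (h0.integrableOn (s := awayInt ε)) (measurable_integrand x).aestronglyMeasurable ?_
  refine (ae_restrict_iff' (measurableSet_awayInt ε)).mpr (Eventually.of_forall fun a ha => ?_)
  have h1 := abs_cotPi_le hε ha
  rw [integrand, show -Real.pi * a ^ 2 * x = -(Real.pi * x) * a ^ 2 by ring, mul_comm a (cotPi a),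
    mul_assoc, norm_mul, norm_mul (1 / (2 * ε))]
  gcongr
  rw [Real.norm_eq_abs, Real.norm_eq_abs]
  exact h1.trans (le_abs_self _)

/-- Periodization: the integral over the line is the integral over a period of the sum of the
integer translates. -/
lemma integral_eq_integral_tsum_translates {f : ℝ → ℝ} (hf : Integrable f) :
    ∫ a, f a = ∫ a in (0 : ℝ)..1, ∑' n : ℤ, f (a + n) := by
  rw [← hf.hasSum_intervalIntegral_comp_add_int.tsum_eq]
  simp only [intervalIntegral.integral_of_le zero_le_one]
  refine integral_tsum_of_summable_integral_norm
    (fun n => (hf.comp_add_right (n : ℝ)).integrableOn) ?_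
  simpa only [intervalIntegral.integral_of_le zero_le_one]
    using hf.norm.hasSum_intervalIntegral_comp_add_int.summable

lemma summable_pow_mul_exp (k : ℕ) {T : ℝ} (hT : 0 < T) :
    Summable fun n : ℕ => (n : ℝ) ^ k * Real.exp (-Real.pi * n ^ 2 * T) := by
  have h := (summable_pow_mul_jacobiTheta₂_term_bound 0 hT k).comp_injective Nat.cast_injective
  refine h.congr fun n => ?_
  simp [mul_comm, mul_left_comm]

/-! ### The limit with all integers excised -/

/-- The sine coefficient of `cot (π a)` on `[0, 1]`, truncated to the points at distance at least
`ε` from the integers. -/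
noncomputable def truncCoeff (n : ℕ) (ε : ℝ) : ℝ :=
  ∫ a in (0 : ℝ)..1, (awayInt ε).indicator (fun a => cotPi a * Real.sin (2 * Real.pi * a * n)) a

lemma abs_indicator_le (n : ℕ) (ε a : ℝ) :
    |(awayInt ε).indicator (fun a => cotPi a * Real.sin (2 * Real.pi * a * n)) a| ≤ 2 * n := by
  by_cases h : a ∈ awayInt ε
  · rw [Set.indicator_of_mem h]; exact abs_cotPi_mul_sin_le n a
  · rw [Set.indicator_of_notMem h]; simp

lemma measurable_indicator (n : ℕ) (ε : ℝ) : Measurable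
    ((awayInt ε).indicator (fun a => cotPi a * Real.sin (2 * Real.pi * a * n))) := by
  have := measurable_cotPi
  exact Measurable.indicator (by fun_prop) (measurableSet_awayInt ε)

lemma abs_truncCoeff_le (n : ℕ) (ε : ℝ) : |truncCoeff n ε| ≤ 2 * n := by
  have := intervalIntegral.norm_integral_le_of_norm_le_const (a := 0) (b := 1)
    (f := (awayInt ε).indicator (fun a => cotPi a * Real.sin (2 * Real.pi * a * n))) (C := 2 * n)
    (fun a _ => abs_indicator_le n ε a)
  simpa [truncCoeff] using this

lemma tendsto_truncCoeff (n : ℕ) :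
    Tendsto (truncCoeff n) (𝓝[>] 0) (𝓝 (if n = 0 then 0 else 1)) := by
  rw [← integral_cotPi_mul_sin n]
  refine intervalIntegral.tendsto_integral_filter_of_dominated_convergence (fun _ => (2 * n : ℝ))
    (Eventually.of_forall fun ε => (measurable_indicator n ε).aestronglyMeasurable)
    (Eventually.of_forall fun ε => Eventually.of_forall fun a _ => abs_indicator_le n ε a)
    intervalIntegrable_const ?_
  -- only interior points matter: there the indicator is eventually equal to `1`
  have h1 : ∀ᵐ a : ℝ, a ≠ 1 := by simp [ae_iff]
  filter_upwards [h1] with a ha1 ha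
  rw [Set.uIoc_of_le zero_le_one] at ha
  have hlt : a < 1 := lt_of_le_of_ne ha.2 ha1
  refine tendsto_const_nhds.congr' ?_
  have hpos : 0 < min a (1 - a) := lt_min ha.1 (by linarith)
  filter_upwards [Ioo_mem_nhdsGT hpos] with ε hε
  rw [Set.indicator_of_mem]
  intro m
  have h2 := hε.2.le.trans (min_le_left _ _)
  have h3 := hε.2.le.trans (min_le_right _ _)
  rcases le_or_gt m 0 with hm | hm
  · have : (m : ℝ) ≤ 0 := by exact_mod_cast hm
    rw [abs_of_nonneg (by linarith [ha.1])]; linarith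
  · have : (1 : ℝ) ≤ m := by exact_mod_cast hm
    rw [abs_of_neg (by linarith)]; linarith

/-- The periodization of `a exp (-π x a²)` is expanded in a sine series by the functional equation
of the odd theta kernel, and integrated termwise. -/
lemma hasSum_truncated {ε x : ℝ} (hε : 0 < ε) (hx : 0 < x) :
    HasSum (fun n : ℕ => 1 / x ^ (3 / 2 : ℝ) *
        (2 * (n * Real.exp (-Real.pi * n ^ 2 * (1 / x)))) * truncCoeff n ε)
      (∫ a in awayInt ε, integrand x a) := by
  have hx' : 0 < 1 / x := by positivity
  rw [← integral_indicator (measurableSet_awayInt ε), integral_eq_integral_tsum_translates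
    ((integrable_indicator_iff (measurableSet_awayInt ε)).mpr (integrableOn_awayInt hε hx))]
  have hsum : Summable fun n : ℕ => 1 / x ^ (3 / 2 : ℝ) *
      (2 * (n * Real.exp (-Real.pi * n ^ 2 * (1 / x)))) * (2 * n) := by
    refine ((summable_pow_mul_exp 2 hx').mul_left (4 * (1 / x ^ (3 / 2 : ℝ)))).congr fun n => ?_
    ring
  have key := intervalIntegral.hasSum_integral_of_dominated_convergence
    (a := 0) (b := 1) (μ := volume)
    (F := fun (n : ℕ) a => 1 / x ^ (3 / 2 : ℝ) *
      (2 * (n * Real.exp (-Real.pi * n ^ 2 * (1 / x)))) *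
      (awayInt ε).indicator (fun a => cotPi a * Real.sin (2 * Real.pi * a * n)) a)
    (f := fun a => ∑' n : ℤ, (awayInt ε).indicator (integrand x) (a + n))
    (fun n _ => 1 / x ^ (3 / 2 : ℝ) *
      (2 * (n * Real.exp (-Real.pi * n ^ 2 * (1 / x)))) * (2 * n))
    (fun n => ((measurable_indicator n ε).const_mul _).aestronglyMeasurable)
    (fun n => Eventually.of_forall fun a _ => by
      rw [norm_mul, Real.norm_of_nonneg (by positivity)]
      gcongr
      exact abs_indicator_le n ε a)
    (Eventually.of_forall fun a _ => hsum)
    intervalIntegrable_const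
    (Eventually.of_forall fun a _ => ?_)
  · simpa only [intervalIntegral.integral_const_mul, truncCoeff] using key
  by_cases ha : a ∈ awayInt ε
  · have h1 := (HurwitzZeta.hasSum_int_oddKernel a hx).mul_left (cotPi a)
    have h2 := ((HurwitzZeta.hasSum_nat_sinKernel a hx').mul_left (1 / x ^ (3 / 2 : ℝ))).mul_left
      (cotPi a)
    rw [← HurwitzZeta.oddKernel_functional_equation, ← h1.tsum_eq] at h2
    have e : ∀ n : ℤ, (awayInt ε).indicator (integrand x) (a + n)
        = cotPi a * ((n + a) * Real.exp (-Real.pi * (n + a) ^ 2 * x)) := fun n => by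
      rw [Set.indicator_of_mem ((add_int_mem_awayInt ε a n).mpr ha), integrand, cotPi_add_int,
        add_comm a]
      ring
    simp only [e]
    refine h2.congr_fun fun n => ?_
    rw [Set.indicator_of_mem ha]
    ring
  · have e : ∀ n : ℤ, (awayInt ε).indicator (integrand x) (a + n) = 0 := fun n =>
      Set.indicator_of_notMem (fun h => ha ((add_int_mem_awayInt ε a n).mp h)) _
    simp only [e, Set.indicator_of_notMem ha, mul_zero, tsum_zero]
    exact hasSum_zero

lemma tendsto_integral_awayInt {x : ℝ} (hx : 0 < x) :
    Tendsto (fun ε => ∫ a in awayInt ε, integrand x a) (𝓝[>] 0)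
      (𝓝 (1 / x ^ (3 / 2 : ℝ) * 2 *
        ∑' n : ℕ, ((n : ℝ) + 1) * Real.exp (-Real.pi * ((n : ℝ) + 1) ^ 2 * (1 / x)))) := by
  have hx' : 0 < 1 / x := by positivity
  have hsum : Summable fun n : ℕ => 1 / x ^ (3 / 2 : ℝ) *
      (2 * (n * Real.exp (-Real.pi * n ^ 2 * (1 / x)))) * (2 * n) := by
    refine ((summable_pow_mul_exp 2 hx').mul_left (4 * (1 / x ^ (3 / 2 : ℝ)))).congr fun n => ?_
    ring
  have key := tendsto_tsum_of_dominated_convergence (𝓕 := 𝓝[>] (0 : ℝ))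
    (f := fun ε (n : ℕ) => 1 / x ^ (3 / 2 : ℝ) *
        (2 * (n * Real.exp (-Real.pi * n ^ 2 * (1 / x)))) * truncCoeff n ε) hsum
    (fun n => (tendsto_truncCoeff n).const_mul _)
    (Eventually.of_forall fun ε n => by
      rw [norm_mul, Real.norm_of_nonneg (by positivity)]
      gcongr
      exact abs_truncCoeff_le n ε)
  have e : (∑' n : ℕ, 1 / x ^ (3 / 2 : ℝ) *
      (2 * (n * Real.exp (-Real.pi * n ^ 2 * (1 / x)))) * (if n = 0 then 0 else 1)) =
      1 / x ^ (3 / 2 : ℝ) * 2 *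
        ∑' n : ℕ, ((n : ℝ) + 1) * Real.exp (-Real.pi * ((n : ℝ) + 1) ^ 2 * (1 / x)) := by
    have h1 := (summable_pow_mul_exp 1 hx').mul_left (1 / x ^ (3 / 2 : ℝ) * 2)
    have e1 : ∀ n : ℕ, 1 / x ^ (3 / 2 : ℝ) *
      (2 * (n * Real.exp (-Real.pi * n ^ 2 * (1 / x)))) * (if n = 0 then 0 else 1) =
      1 / x ^ (3 / 2 : ℝ) * 2 * ((n : ℝ) ^ 1 * Real.exp (-Real.pi * n ^ 2 * (1 / x))) := by
      intro n
      rcases eq_or_ne n 0 with h | h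
      · simp [h]
      · simp only [h, if_false]; ring
    simp only [e1]
    rw [h1.tsum_eq_zero_add, ← tsum_mul_left]
    simp
  rw [e] at key
  refine key.congr' ?_
  filter_upwards [self_mem_nhdsWithin] with ε hε
  exact (hasSum_truncated hε hx).tsum_eq

/-! ### Restoring the neighbourhood of `0` -/

/-- Near `0` the integrand is bounded: the singularity is removable. -/
lemma abs_integrand_le {x a : ℝ} (hx : 0 < x) (ha : |a| ≤ 1 / 2) : |integrand x a| ≤ 1 / 2 := by
  have hp := Real.pi_pos
  have h3 : |Real.pi * a| ≤ Real.pi / 2 := by rw [abs_mul, abs_of_pos hp]; nlinarith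
  have h4 := Real.mul_abs_le_abs_sin h3
  rw [abs_mul, abs_of_pos hp,
    show 2 / Real.pi * (Real.pi * |a|) = 2 * |a| by field_simp] at h4
  have h5 : |a * cotPi a| ≤ 1 / 2 := by
    unfold cotPi
    rw [abs_mul, abs_div]
    rcases eq_or_ne (Real.sin (Real.pi * a)) 0 with h0 | h0
    · simp [h0]
    · rw [← mul_div_assoc, div_le_iff₀ (abs_pos.mpr h0)]
      nlinarith [Real.abs_cos_le_one (Real.pi * a), abs_nonneg a]
  have h6 : Real.exp (-Real.pi * a ^ 2 * x) ≤ 1 := by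
    rw [Real.exp_le_one_iff]
    have : 0 ≤ Real.pi * a ^ 2 * x := by positivity
    linarith
  rw [integrand, abs_mul, Real.abs_exp]
  calc _ ≤ (1 / 2 : ℝ) * 1 := by gcongr
    _ = 1 / 2 := by ring

/-- The domain of integration of the principal value, in the variable `a = p / 2π`. -/
def awayNonzeroInt (ε : ℝ) : Set ℝ := {a : ℝ | ∀ m : ℤ, m ≠ 0 → ε ≤ |a - m|}

lemma awayNonzeroInt_eq {ε : ℝ} (hε : ε ≤ 1 / 2) :
    awayNonzeroInt ε = awayInt ε ∪ Set.Ioo (-ε) ε := by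
  ext a
  constructor
  · intro h
    by_cases h0 : |a| < ε
    · exact Or.inr (abs_lt.mp h0)
    · refine Or.inl fun m => ?_
      rcases eq_or_ne m 0 with rfl | hm
      · simpa using h0
      · exact h m hm
  · rintro (h | h) m hm
    · exact h m
    · have h1 : (1 : ℝ) ≤ |(m : ℝ)| := by exact_mod_cast Int.one_le_abs hm
      have h2 := abs_lt.mpr h
      have h3 := abs_sub_abs_le_abs_sub (m : ℝ) a
      rw [abs_sub_comm] at h3
      linarith

lemma tendsto_integral_awayNonzeroInt {x : ℝ} (hx : 0 < x) :
    Tendsto (fun ε => ∫ a in awayNonzeroInt ε, integrand x a) (𝓝[>] 0)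
      (𝓝 (1 / x ^ (3 / 2 : ℝ) * 2 *
        ∑' n : ℕ, ((n : ℝ) + 1) * Real.exp (-Real.pi * ((n : ℝ) + 1) ^ 2 * (1 / x)))) := by
  have hsmall : Tendsto (fun ε : ℝ => ∫ a in Set.Ioo (-ε) ε, integrand x a) (𝓝[>] 0) (𝓝 0) := by
    refine squeeze_zero_norm' (a := fun ε : ℝ => ε) ?_ (tendsto_id.mono_left nhdsWithin_le_nhds)
    filter_upwards [Ioo_mem_nhdsGT (show (0 : ℝ) < 1 / 2 by norm_num)] with ε hε
    have h := norm_setIntegral_le_of_norm_le_const (μ := volume) (s := Set.Ioo (-ε) ε)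
      (f := integrand x) (C := 1 / 2) measure_Ioo_lt_top
      (fun a ha => abs_integrand_le hx ((abs_lt.mpr ha).le.trans hε.2.le))
    rw [Real.volume_real_Ioo_of_le (by linarith [hε.1])] at h
    linarith
  have h := (tendsto_integral_awayInt hx).add hsmall
  rw [add_zero] at h
  refine h.congr' ?_
  filter_upwards [Ioo_mem_nhdsGT (show (0 : ℝ) < 1 / 2 by norm_num)] with ε hε
  rw [awayNonzeroInt_eq hε.2.le, setIntegral_union ?_ measurableSet_Ioo
    (integrableOn_awayInt hε.1 hx)]
  · refine Measure.integrableOn_of_bounded (M := 1 / 2) measure_Ioo_lt_top.ne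
      (measurable_integrand x).aestronglyMeasurable ?_
    refine (ae_restrict_iff' measurableSet_Ioo).mpr (Eventually.of_forall fun a ha => ?_)
    exact abs_integrand_le hx ((abs_lt.mpr ha).le.trans hε.2.le)
  · rw [Set.disjoint_left]
    intro a ha ha'
    have := ha 0
    rw [Int.cast_zero, sub_zero] at this
    exact absurd (abs_lt.mpr ha') (not_lt.mpr this)

lemma measurableSet_awayNonzeroInt (ε : ℝ) : MeasurableSet (awayNonzeroInt ε) := by
  have : awayNonzeroInt ε = ⋂ m : ℤ, ⋂ _ : m ≠ 0, {a : ℝ | ε ≤ |a - m|} := by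
    ext a; simp [awayNonzeroInt]
  rw [this]
  exact MeasurableSet.iInter fun m => MeasurableSet.iInter fun _ =>
    measurableSet_le measurable_const (by fun_prop)

/-! ### Return to the variable `p` -/

/-- The substitution `p = 2 π a`. -/
lemma integral_rescale (t δ : ℝ) :
    (∫ p in {p : ℝ | ∀ m : ℤ, m ≠ 0 → δ ≤ |p - 2 * Real.pi * (m : ℝ)|},
      p * (Real.cos (p / 2) / Real.sin (p / 2)) * Real.exp (-t * p ^ 2)) =
    (2 * Real.pi) ^ 2 *
      ∫ a in awayNonzeroInt (δ / (2 * Real.pi)), integrand (4 * Real.pi * t) a := by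
  have hp : 0 < 2 * Real.pi := by positivity
  have hmem : ∀ a : ℝ,
      2 * Real.pi * a ∈ {p : ℝ | ∀ m : ℤ, m ≠ 0 → δ ≤ |p - 2 * Real.pi * (m : ℝ)|} ↔
      a ∈ awayNonzeroInt (δ / (2 * Real.pi)) := by
    intro a
    simp only [awayNonzeroInt, Set.mem_ofPred_eq]
    refine forall_congr' fun m => imp_congr_right fun _ => ?_
    rw [div_le_iff₀ hp, ← mul_sub, abs_mul, abs_of_pos hp, mul_comm]
  have hmeas : MeasurableSet
      {p : ℝ | ∀ m : ℤ, m ≠ 0 → δ ≤ |p - 2 * Real.pi * (m : ℝ)|} := by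
    have : {p : ℝ | ∀ m : ℤ, m ≠ 0 → δ ≤ |p - 2 * Real.pi * (m : ℝ)|} =
        ⋂ m : ℤ, ⋂ _ : m ≠ 0, {p : ℝ | δ ≤ |p - 2 * Real.pi * (m : ℝ)|} := by
      ext a; simp
    rw [this]
    exact MeasurableSet.iInter fun m => MeasurableSet.iInter fun _ =>
      measurableSet_le measurable_const (by fun_prop)
  rw [← integral_indicator hmeas, ← integral_indicator (measurableSet_awayNonzeroInt _)]
  have h := Measure.integral_comp_mul_left
    ({p : ℝ | ∀ m : ℤ, m ≠ 0 → δ ≤ |p - 2 * Real.pi * (m : ℝ)|}.indicator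
      fun p => p * (Real.cos (p / 2) / Real.sin (p / 2)) * Real.exp (-t * p ^ 2)) (2 * Real.pi)
  have e : ∀ a : ℝ, ({p : ℝ | ∀ m : ℤ, m ≠ 0 → δ ≤ |p - 2 * Real.pi * (m : ℝ)|}.indicator
      fun p => p * (Real.cos (p / 2) / Real.sin (p / 2)) * Real.exp (-t * p ^ 2)) (2 * Real.pi * a)
      = 2 * Real.pi *
        (awayNonzeroInt (δ / (2 * Real.pi))).indicator (integrand (4 * Real.pi * t)) a := by
    intro a
    by_cases ha : a ∈ awayNonzeroInt (δ / (2 * Real.pi))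
    · rw [Set.indicator_of_mem ha, Set.indicator_of_mem ((hmem a).mpr ha), integrand, cotPi,
        show 2 * Real.pi * a / 2 = Real.pi * a by ring,
        show -t * (2 * Real.pi * a) ^ 2 = -Real.pi * a ^ 2 * (4 * Real.pi * t) by ring]
      ring
    · rw [Set.indicator_of_notMem ha, Set.indicator_of_notMem (fun h => ha ((hmem a).mp h)),
        mul_zero]
  simp only [e] at h
  rw [integral_const_mul, abs_of_pos (inv_pos.mpr hp), smul_eq_mul] at h
  rw [pow_two, mul_assoc, h, ← mul_assoc, mul_inv_cancel₀ hp.ne', one_mul]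

lemma rpow_const_eq {t : ℝ} (ht : 0 < t) :
    2 * Real.pi * (1 / (4 * Real.pi * t) ^ (3 / 2 : ℝ) * 2) =
      (4 * Real.pi) ^ (-(1 : ℝ) / 2) * t ^ (-(3 : ℝ) / 2) := by
  have hp : 0 < 4 * Real.pi := by positivity
  rw [Real.mul_rpow hp.le ht.le, show (-(3 : ℝ) / 2) = -(3 / 2) by ring, Real.rpow_neg ht.le,
    show (-(1 : ℝ) / 2) = 1 - 3 / 2 by norm_num, Real.rpow_sub hp, Real.rpow_one]
  field_simp
  ring

lemma exp_arg_eq (t y : ℝ) :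
    -Real.pi * y ^ 2 * (1 / (4 * Real.pi * t)) = -y ^ 2 / (4 * t) := by
  have := Real.pi_pos.ne'
  field_simp

end PVCot

/-- The principal value integral
`(1/2π) p.v. ∫_ℝ p cot(p/2) e^{−tp²} dp = (4π)^{−1/2} t^{−3/2} Σ_{k≥1} k e^{−k²/4t}`,
the principal value being the limit, as `δ → 0⁺`, of the integral over `ℝ` with the open
intervals of radius `δ` around the singular points `2πm`, `m ∈ ℤ \ {0}`, removed (at
`p = 0` the integrand has a removable singularity); the series on the right converges
absolutely. -/
theorem pv_cot_integral (t : ℝ) (ht : 0 < t) :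
    Summable (fun k : ℕ =>
      ((k : ℝ) + 1) * Real.exp (-((k : ℝ) + 1) ^ 2 / (4 * t))) ∧
    Tendsto
      (fun δ : ℝ => (1 / (2 * Real.pi)) *
        ∫ p in {p : ℝ | ∀ m : ℤ, m ≠ 0 → δ ≤ |p - 2 * Real.pi * (m : ℝ)|},
          p * (Real.cos (p / 2) / Real.sin (p / 2)) * Real.exp (-t * p ^ 2))
      (𝓝[>] (0 : ℝ))
      (𝓝 ((4 * Real.pi) ^ (-(1 : ℝ) / 2) * t ^ (-(3 : ℝ) / 2) *
        ∑' k : ℕ, ((k : ℝ) + 1) * Real.exp (-((k : ℝ) + 1) ^ 2 / (4 * t)))) := by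
  have hx : 0 < 4 * Real.pi * t := by positivity
  have hp : 0 < 2 * Real.pi := by positivity
  refine ⟨?_, ?_⟩
  · refine ((summable_nat_add_iff 1).mpr
      (PVCot.summable_pow_mul_exp 1 (one_div_pos.mpr hx))).congr fun k => ?_
    rw [PVCot.exp_arg_eq]
    push_cast
    rw [pow_one]
  · have hscale : Tendsto (fun δ : ℝ => δ / (2 * Real.pi)) (𝓝[>] 0) (𝓝[>] 0) := by
      refine tendsto_nhdsWithin_iff.mpr ⟨?_, ?_⟩
      · have h : Tendsto (fun δ : ℝ => δ / (2 * Real.pi)) (𝓝 0) (𝓝 (0 / (2 * Real.pi))) :=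
          tendsto_id.div_const _
        rw [zero_div] at h
        exact h.mono_left nhdsWithin_le_nhds
      · filter_upwards [self_mem_nhdsWithin] with δ hδ
        exact div_pos hδ hp
    have h := ((PVCot.tendsto_integral_awayNonzeroInt hx).comp hscale).const_mul (2 * Real.pi)
    rw [← mul_assoc, PVCot.rpow_const_eq ht] at h
    simp only [PVCot.exp_arg_eq] at h
    refine h.congr fun δ => ?_
    rw [PVCot.integral_rescale, Function.comp_apply]
    field_simp
end

section
/- For every t > 0, the principal value integral of (p/sin p) e^{−t p²} over ℝ, with singularities at the nonzero multiples of π, satisfies the identity (1/(2π)) · p.v. ∫_ℝ (p/ sin p) exp(−t p²) dp = (4π)^{−1/2} t^{−3/2} Σ_{k=0}^{∞} (2k+1) exp(−(2k+1)²/(4t)), and the series on the right converges absolutely. (At p = 0 the integrand extends continuously with value 1.) -/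
/-!
Put `E(p) = p exp (-t p²)`. Excising also the origin changes the cut-off integral by `O(δ)`, and makes
the domain of integration `2π`-periodic. Since `sin` is `2π`-periodic too, the integral becomes
`∫ K(x) / sin x dx` over one period with the cuts removed, where `K(x) = ∑ₙ E(x + 2πn)`
(`setIntegral_cutSet`). Up to scaling, `K` is the odd theta kernel `HurwitzZeta.oddKernel`, whose
functional equation gives
`K(x) = 2π (4πt)^(-3/2) ∑ₙ 2n exp (-n²/4t) sin (n x)` (`hasSum_oddKernel_div_sin`).
Because `|sin (n x)| ≤ n |sin x|`, the quotient `K / sin` is bounded, so the limit `δ → 0⁺` is an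
application of dominated convergence and the limit is the ordinary integral of `K / sin` over a period
(`tendsto_setIntegral_cutSet`). Integrating the series term by term, with
`∫ sin (n x) / sin x dx = 2π` over a period for odd `n` and `0` for even `n` (`integral_dirichlet`),
yields the series over odd integers.
-/

open scoped Topology
open MeasureTheory Filter
open Real Set HurwitzZeta

/-- The real line with the open `δ`-neighbourhoods of all multiples of `π` removed, the neighbourhood
of `0` included. Unlike the domain in the principal value, this set is periodic. -/
def cutSet (δ : ℝ) : Set ℝ := {p | ∀ m : ℤ, δ ≤ |p - π * (m : ℝ)|}

lemma abs_sin_sub_pi_mul (p : ℝ) (m : ℤ) : |sin (p - π * m)| = |sin p| := by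
  rw [mul_comm, sin_sub_int_mul_pi, abs_mul, abs_zpow]
  simp

lemma le_abs_sin_of_mem_cutSet {δ p : ℝ} (hp : p ∈ cutSet δ) : 2 / π * δ ≤ |sin p| := by
  have h := hp (round (p / π))
  have h2 : |p - π * (round (p / π) : ℝ)| ≤ π / 2 := by
    have h3 := abs_sub_round (p / π)
    have h4 : p - π * (round (p / π) : ℝ) = π * (p / π - round (p / π)) := by
      field_simp
    rw [h4, abs_mul, abs_of_pos pi_pos]
    nlinarith [pi_pos]
  rw [← abs_sin_sub_pi_mul p (round (p / π))]
  refine le_trans ?_ (mul_abs_le_abs_sin h2)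
  gcongr

lemma mem_cutSet_of_le_abs_sin {δ p : ℝ} (hp : δ ≤ |sin p|) : p ∈ cutSet δ := by
  intro m
  rw [← abs_sin_sub_pi_mul p m] at hp
  exact hp.trans abs_sin_le_abs

lemma add_two_pi_mem_cutSet {δ p : ℝ} (n : ℤ) :
    p + 2 * π * n ∈ cutSet δ ↔ p ∈ cutSet δ := by
  constructor
  · intro h m
    convert h (m + 2 * n) using 2
    push_cast; ring
  · intro h m
    convert h (m - 2 * n) using 2
    push_cast; ring

lemma isClosed_cutSet (δ : ℝ) : IsClosed (cutSet δ) := by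
  have : cutSet δ = ⋂ m : ℤ, {p : ℝ | δ ≤ |p - π * (m : ℝ)|} := by
    ext p; simp [cutSet]
  rw [this]
  exact isClosed_iInter fun m => isClosed_le continuous_const (by fun_prop)

lemma abs_sin_nat_mul_le (n : ℕ) (x : ℝ) : |sin (x * n)| ≤ n * |sin x| := by
  induction n with
  | zero => simp
  | succ n ih =>
    push_cast
    rw [mul_add, mul_one, sin_add]
    calc _ ≤ |sin (x * n) * cos x| + |cos (x * n) * sin x| := abs_add_le _ _
      _ ≤ |sin (x * n)| * 1 + 1 * |sin x| := by
        rw [abs_mul, abs_mul]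
        gcongr
        · exact abs_cos_le_one _
        · exact abs_cos_le_one _
      _ ≤ _ := by linarith

/-- Valid also where `sin x = 0`, since the quotient is then `0`. -/
lemma abs_sin_nat_mul_div_le (n : ℕ) (x : ℝ) : |sin (x * n) / sin x| ≤ n := by
  rw [abs_div]
  exact div_le_of_le_mul₀ (abs_nonneg _) (by positivity) (abs_sin_nat_mul_le n x)

lemma intervalIntegrable_dirichlet (n : ℕ) :
    IntervalIntegrable (fun u : ℝ => sin (2 * π * u * n) / sin (2 * π * u)) volume 0 1 := by
  rw [intervalIntegrable_iff]
  refine Measure.integrableOn_of_bounded (M := n) (by simp)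
    (Measurable.aestronglyMeasurable (by fun_prop)) ?_
  exact ae_of_all _ fun u => abs_sin_nat_mul_div_le n _

lemma ae_sin_ne_zero : ∀ᵐ u : ℝ, sin (2 * π * u) ≠ 0 := by
  have : {u : ℝ | ¬ sin (2 * π * u) ≠ 0} ⊆ range fun n : ℤ => (n : ℝ) / 2 := by
    intro u hu
    simp only [ne_eq, not_not, mem_ofPred_eq, sin_eq_zero_iff] at hu
    obtain ⟨n, hn⟩ := hu
    refine ⟨n, ?_⟩
    have : π * (n - 2 * u) = 0 := by linarith
    rcases mul_eq_zero.1 this with h | h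
    · exact absurd h pi_ne_zero
    · simp only; linarith
  exact ((countable_range _).mono this).measure_zero _

/-- The normalised integral of the Dirichlet-type kernel `sin (n x) / sin x` over a period. The recursion
`sin ((n + 2) x) / sin x = sin (n x) / sin x + 2 cos ((n + 1) x)` holds off the null set of zeros
of `sin x`. -/
lemma integral_dirichlet (n : ℕ) :
    ∫ u in (0 : ℝ)..1, sin (2 * π * u * n) / sin (2 * π * u) = if Odd n then 1 else 0 := by
  induction n using Nat.twoStepInduction with
  | zero => simp
  | one =>
    have : ∫ u in (0 : ℝ)..1, sin (2 * π * u * (1 : ℕ)) / sin (2 * π * u)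
        = ∫ u in (0 : ℝ)..1, (1 : ℝ) := by
      apply intervalIntegral.integral_congr_ae
      filter_upwards [ae_sin_ne_zero] with u hu _
      simp [hu]
    rw [this]; simp
  | more n ih _ =>
    have key : ∫ u in (0 : ℝ)..1, sin (2 * π * u * (n + 2 : ℕ)) / sin (2 * π * u)
        = ∫ u in (0 : ℝ)..1, (sin (2 * π * u * n) / sin (2 * π * u)
            + 2 * cos (2 * π * (n + 1) * u)) := by
      apply intervalIntegral.integral_congr_ae
      filter_upwards [ae_sin_ne_zero] with u hu _
      rw [div_eq_iff hu, add_mul, div_mul_cancel₀ _ hu]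
      have h1 : 2 * π * u * (n + 2 : ℕ) = 2 * π * (n + 1) * u + 2 * π * u := by push_cast; ring
      have h2 : 2 * π * u * n = 2 * π * (n + 1) * u - 2 * π * u := by ring
      rw [h1, h2, sin_add, sin_sub]; ring
    have hcos : ∫ u in (0 : ℝ)..1, 2 * cos (2 * π * (n + 1) * u) = 0 := by
      have hne : 2 * π * ((n : ℝ) + 1) ≠ 0 := by positivity
      rw [intervalIntegral.integral_const_mul,
        intervalIntegral.integral_comp_mul_left (fun x => cos x) hne, integral_cos]
      have : sin (2 * π * ((n : ℝ) + 1) * 1) = 0 :=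
        sin_eq_zero_iff.2 ⟨2 * (n + 1), by push_cast; ring⟩
      rw [this]; simp
    rw [key, intervalIntegral.integral_add (intervalIntegrable_dirichlet n)
      (Continuous.intervalIntegrable (by fun_prop) _ _), ih, hcos, add_zero]
    congr 1
    simp [Nat.odd_add]

lemma summable_pow_mul_gauss (k : ℕ) {t : ℝ} (ht : 0 < t) :
    Summable fun n : ℕ => (n : ℝ) ^ k * exp (-(n : ℝ) ^ 2 / (4 * t)) := by
  refine Summable.of_nonneg_of_le (fun n => by positivity) (fun n => ?_)
    (summable_pow_mul_exp_neg_nat_mul k (r := 1 / (4 * t)) (by positivity))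
  have : (n : ℝ) ≤ (n : ℝ) ^ 2 := by exact_mod_cast Nat.le_self_pow two_ne_zero n
  gcongr
  rw [neg_div, neg_mul, neg_le_neg_iff, one_div, inv_mul_eq_div]
  gcongr

/-- The functional equation of the odd theta kernel (Poisson summation) turns the periodised Gaussian
into a sine series, here divided by `sin (2πu)` termwise. -/
lemma hasSum_oddKernel_div_sin {t : ℝ} (ht : 0 < t) (u : ℝ) :
    HasSum (fun n : ℕ => 1 / (4 * π * t) ^ (3 / 2 : ℝ) *
        (2 * (n : ℝ) * exp (-(n : ℝ) ^ 2 / (4 * t))) *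
          (sin (2 * π * u * n) / sin (2 * π * u)))
      (oddKernel u (4 * π * t) / sin (2 * π * u)) := by
  rw [oddKernel_functional_equation]
  convert! ((hasSum_nat_sinKernel u (t := 1 / (4 * π * t)) (by positivity)).mul_left
    (1 / (4 * π * t) ^ (3 / 2 : ℝ))).div_const (sin (2 * π * u)) using 2 with n
  have : -π * (n : ℝ) ^ 2 * (1 / (4 * π * t)) = -(n : ℝ) ^ 2 / (4 * t) := by
    field_simp
  rw [this]; ring

/-- Uniform bound for the terms of the series in `hasSum_oddKernel_div_sin`, summable in `n`. -/
lemma abs_term_le {t : ℝ} (ht : 0 < t) (n : ℕ) (u : ℝ) :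
    |1 / (4 * π * t) ^ (3 / 2 : ℝ) * (2 * (n : ℝ) * exp (-(n : ℝ) ^ 2 / (4 * t))) *
          (sin (2 * π * u * n) / sin (2 * π * u))| ≤
     1 / (4 * π * t) ^ (3 / 2 : ℝ) * 2 * ((n : ℝ) ^ 2 * exp (-(n : ℝ) ^ 2 / (4 * t))) := by
  have h0 : 0 ≤ 1 / (4 * π * t) ^ (3 / 2 : ℝ) * (2 * (n : ℝ) * exp (-(n : ℝ) ^ 2 / (4 * t))) := by
    positivity
  rw [abs_mul, abs_of_nonneg h0]
  refine (mul_le_mul_of_nonneg_left (abs_sin_nat_mul_div_le n _) h0).trans (le_of_eq ?_)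
  ring

/-- Division by the sine creates no singularity: the periodised function vanishes at the zeros of
`sin (2πu)`. -/
lemma exists_bound_oddKernel_div_sin {t : ℝ} (ht : 0 < t) :
    ∃ C : ℝ, ∀ u : ℝ, |oddKernel u (4 * π * t) / sin (2 * π * u)| ≤ C := by
  refine ⟨∑' n : ℕ, 1 / (4 * π * t) ^ (3 / 2 : ℝ) * 2 *
    ((n : ℝ) ^ 2 * exp (-(n : ℝ) ^ 2 / (4 * t))), fun u => ?_⟩
  rw [← (hasSum_oddKernel_div_sin ht u).tsum_eq]
  rw [← Real.norm_eq_abs]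
  exact tsum_of_norm_bounded ((summable_pow_mul_gauss 2 ht).mul_left _).hasSum
    fun n => abs_term_le ht n u

lemma measurable_oddKernel_div_sin {t : ℝ} (ht : 0 < t) :
    Measurable fun u : ℝ => oddKernel u (4 * π * t) / sin (2 * π * u) := by
  refine measurable_of_tendsto_metrizable (f := fun N (u : ℝ) => ∑ n ∈ Finset.range N,
    1 / (4 * π * t) ^ (3 / 2 : ℝ) * (2 * (n : ℝ) * exp (-(n : ℝ) ^ 2 / (4 * t))) *
          (sin (2 * π * u * n) / sin (2 * π * u))) (fun N => ?_) ?_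
  · exact Finset.measurable_fun_sum _ fun n _ => by fun_prop
  · rw [tendsto_pi_nhds]
    exact fun u => (hasSum_oddKernel_div_sin ht u).tendsto_sum_nat

lemma summable_odd {t : ℝ} (ht : 0 < t) : Summable fun k : ℕ =>
      (2 * (k : ℝ) + 1) * exp (-(2 * (k : ℝ) + 1) ^ 2 / (4 * t)) := by
  have := (summable_pow_mul_gauss 1 ht).comp_injective
    (i := fun k : ℕ => 2 * k + 1) (fun a b h => by simpa using h)
  refine this.congr fun k => ?_
  simp

/-- Termwise integration of the sine series: only odd frequencies contribute. -/
lemma integral_oddKernel_div_sin {t : ℝ} (ht : 0 < t) :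
    ∫ u in (0 : ℝ)..1, oddKernel u (4 * π * t) / sin (2 * π * u) =
      1 / (4 * π * t) ^ (3 / 2 : ℝ) * 2 *
        ∑' k : ℕ, (2 * (k : ℝ) + 1) * exp (-(2 * (k : ℝ) + 1) ^ 2 / (4 * t)) := by
  have hS := (summable_pow_mul_gauss 2 ht).mul_left (1 / (4 * π * t) ^ (3 / 2 : ℝ) * 2)
  have h1 := intervalIntegral.hasSum_integral_of_dominated_convergence (a := 0) (b := 1)
    (μ := volume)
    (F := fun (n : ℕ) (u : ℝ) => 1 / (4 * π * t) ^ (3 / 2 : ℝ) *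
        (2 * (n : ℝ) * exp (-(n : ℝ) ^ 2 / (4 * t))) *
          (sin (2 * π * u * n) / sin (2 * π * u)))
    (f := fun u : ℝ => oddKernel u (4 * π * t) / sin (2 * π * u))
    (fun n _ => 1 / (4 * π * t) ^ (3 / 2 : ℝ) * 2 *
      ((n : ℝ) ^ 2 * exp (-(n : ℝ) ^ 2 / (4 * t))))
    (fun n => Measurable.aestronglyMeasurable (by fun_prop))
    (fun n => ae_of_all _ fun u _ => abs_term_le ht n u)
    (ae_of_all _ fun u _ => hS)
    intervalIntegrable_const
    (ae_of_all _ fun u _ => hasSum_oddKernel_div_sin ht u)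
  simp_rw [intervalIntegral.integral_const_mul, integral_dirichlet] at h1
  have h2 := ((summable_odd ht).hasSum.mul_left (1 / (4 * π * t) ^ (3 / 2 : ℝ) * 2))
  have hinj : Function.Injective (fun k : ℕ => 2 * k + 1) := fun a b h => by simpa using h
  refine h1.unique ((hinj.hasSum_iff ?_).1 (h2.congr_fun fun k => ?_))
  · intro n hn
    have : ¬ Odd n := fun ⟨k, hk⟩ => hn ⟨k, hk.symm⟩
    simp [this]
  · simp; ring

lemma integrableOn_cutSet {δ t : ℝ} (hδ : 0 < δ) (ht : 0 < t) :
    IntegrableOn (fun p : ℝ => p / sin p * exp (-t * p ^ 2)) (cutSet δ) := by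
  have hg : IntegrableOn (fun p : ℝ => p * exp (-t * p ^ 2)) (cutSet δ) :=
    (integrable_mul_exp_neg_mul_sq ht).integrableOn
  have := Integrable.bdd_mul (c := (2 / π * δ)⁻¹) hg (f := fun p => (sin p)⁻¹)
    (Measurable.aestronglyMeasurable (by fun_prop)) ?_
  · refine this.congr (ae_of_all _ fun p => ?_)
    simp only; ring
  · filter_upwards [ae_restrict_mem (isClosed_cutSet δ).measurableSet] with p hp
    rw [norm_inv]
    exact inv_anti₀ (by positivity) (le_abs_sin_of_mem_cutSet hp)

/-- Unfolding of the integral over the periodic set `cutSet δ`: with `p = 2πu`, the translates by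
integers are summed inside the integral, and `∑ₙ (u + n) exp (-4π²t (u + n)²)` is the odd theta kernel. -/
lemma setIntegral_cutSet {δ t : ℝ} (hδ : 0 < δ) (ht : 0 < t) :
    ∫ p in cutSet δ, p / sin p * exp (-t * p ^ 2) =
      4 * π ^ 2 * ∫ u in (0 : ℝ)..1, (cutSet δ).indicator (fun _ => (1 : ℝ)) (2 * π * u) *
        (oddKernel u (4 * π * t) / sin (2 * π * u)) := by
  set F : ℝ → ℝ := (cutSet δ).indicator fun p : ℝ => p / sin p * exp (-t * p ^ 2) with hF
  have hFi : Integrable F :=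
    (integrableOn_cutSet hδ ht).integrable_indicator (isClosed_cutSet δ).measurableSet
  have hGi : Integrable fun u => F (2 * π * u) := hFi.comp_mul_left' (by positivity)
  have hG : ∫ p in cutSet δ, p / sin p * exp (-t * p ^ 2) = 2 * π * ∫ u, F (2 * π * u) := by
    rw [← integral_indicator (isClosed_cutSet δ).measurableSet,
      Measure.integral_comp_mul_left F, abs_of_pos (by positivity), smul_eq_mul,
      mul_inv_cancel_left₀ (by positivity)]
  have hsum := hGi.hasSum_intervalIntegral_comp_add_int
  have hnorm := hGi.norm.hasSum_intervalIntegral_comp_add_int.summable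
  simp only [intervalIntegral.integral_of_le zero_le_one] at hsum hnorm
  have hsum' := hasSum_integral_of_summable_integral_norm
    (F := fun (n : ℤ) (u : ℝ) => F (2 * π * (u + n))) (μ := volume.restrict (Ioc (0 : ℝ) 1))
    (fun n => (hGi.comp_add_right (n : ℝ)).integrableOn) hnorm
  rw [hG, hsum.unique hsum', intervalIntegral.integral_of_le zero_le_one,
    show 4 * π ^ 2 = 2 * π * (2 * π) by ring, mul_assoc (2 * π) (2 * π)]
  congr 1
  rw [← integral_const_mul]
  refine integral_congr_ae (ae_of_all _ fun u => ?_)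
  have hterm : ∀ n : ℤ, F (2 * π * (u + n)) =
      2 * π * ((cutSet δ).indicator (fun _ => (1 : ℝ)) (2 * π * u) / sin (2 * π * u)) *
        ((n + u) * exp (-π * (n + u) ^ 2 * (4 * π * t))) := by
    intro n
    have h1 : 2 * π * (u + n) = 2 * π * u + 2 * π * n := by ring
    have h2 : sin (2 * π * u + 2 * π * n) = sin (2 * π * u) := by
      rw [mul_comm (2 * π) (n : ℝ), sin_add_int_mul_two_pi]
    rw [hF, h1]
    by_cases hu : 2 * π * u ∈ cutSet δ
    · rw [indicator_of_mem ((add_two_pi_mem_cutSet n).2 hu), indicator_of_mem hu, h2]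
      have h3 : -t * (2 * π * u + 2 * π * n) ^ 2 = -π * (n + u) ^ 2 * (4 * π * t) := by ring
      rw [h3]; ring
    · rw [indicator_of_notMem (fun h => hu ((add_two_pi_mem_cutSet n).1 h)),
        indicator_of_notMem hu]
      simp
  simp only [hterm]
  rw [tsum_mul_left, (hasSum_int_oddKernel u (by positivity)).tsum_eq]
  ring

lemma tendsto_setIntegral_cutSet {t : ℝ} (ht : 0 < t) :
    Tendsto (fun δ : ℝ => ∫ p in cutSet δ, p / sin p * exp (-t * p ^ 2)) (𝓝[>] 0)
      (𝓝 (4 * π ^ 2 * ∫ u in (0 : ℝ)..1, oddKernel u (4 * π * t) / sin (2 * π * u))) := by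
  obtain ⟨C, hC⟩ := exists_bound_oddKernel_div_sin ht
  have hev : (fun δ : ℝ => 4 * π ^ 2 * ∫ u in (0 : ℝ)..1,
      (cutSet δ).indicator (fun _ => (1 : ℝ)) (2 * π * u) *
        (oddKernel u (4 * π * t) / sin (2 * π * u))) =ᶠ[𝓝[>] 0]
      fun δ : ℝ => ∫ p in cutSet δ, p / sin p * exp (-t * p ^ 2) := by
    filter_upwards [self_mem_nhdsWithin] with δ hδ
    exact (setIntegral_cutSet hδ ht).symm
  refine Tendsto.congr' hev (Tendsto.const_mul _ ?_)
  refine intervalIntegral.tendsto_integral_filter_of_dominated_convergence (fun _ => C)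
    (Eventually.of_forall fun δ => ?_) (Eventually.of_forall fun δ => ae_of_all _ fun u _ => ?_)
    intervalIntegrable_const ?_
  · refine Measurable.aestronglyMeasurable (Measurable.mul ?_ (measurable_oddKernel_div_sin ht))
    exact (measurable_const.indicator (isClosed_cutSet δ).measurableSet).comp
      (measurable_const_mul _)
  · rw [norm_mul]
    calc _ ≤ 1 * C := by
          gcongr
          · by_cases hu : 2 * π * u ∈ cutSet δ <;> simp [hu]
          · exact hC u
      _ = C := one_mul C
  · filter_upwards [ae_sin_ne_zero] with u hu _
    apply tendsto_nhds_of_eventually_eq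
    have : ∀ᶠ δ : ℝ in 𝓝[>] 0, δ < |sin (2 * π * u)| :=
      nhdsWithin_le_nhds (eventually_lt_nhds (abs_pos.2 hu))
    filter_upwards [this] with δ hδ
    rw [indicator_of_mem (mem_cutSet_of_le_abs_sin hδ.le), one_mul]

lemma abs_integrand_le {t p : ℝ} (ht : 0 < t) (hp : |p| ≤ π / 2) :
    |p / sin p * exp (-t * p ^ 2)| ≤ π / 2 := by
  rw [abs_mul, abs_div, abs_of_pos (exp_pos _)]
  have h1 : |p| / |sin p| ≤ π / 2 := by
    refine div_le_of_le_mul₀ (abs_nonneg _) (by positivity) ?_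
    have := mul_abs_le_abs_sin hp
    calc |p| = π / 2 * (2 / π * |p|) := by field_simp
      _ ≤ _ := by gcongr
  have h2 : exp (-t * p ^ 2) ≤ 1 := exp_le_one_iff.2 (by nlinarith [sq_nonneg p])
  calc _ ≤ π / 2 * 1 := by gcongr
    _ = _ := mul_one _

/-- The origin is not excised in the principal value; the interval `(-δ, δ)` is put back here. -/
lemma setIntegral_eq_cutSet_add {δ t : ℝ} (hδ : 0 < δ) (hδ' : δ < π / 2) (ht : 0 < t) :
    ∫ p in {p : ℝ | ∀ m : ℤ, m ≠ 0 → δ ≤ |p - π * (m : ℝ)|}, p / sin p * exp (-t * p ^ 2) =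
      (∫ p in cutSet δ, p / sin p * exp (-t * p ^ 2)) +
        ∫ p in Ioo (-δ) δ, p / sin p * exp (-t * p ^ 2) := by
  have hset : {p : ℝ | ∀ m : ℤ, m ≠ 0 → δ ≤ |p - π * (m : ℝ)|} = cutSet δ ∪ Ioo (-δ) δ := by
    ext p
    simp only [mem_ofPred_eq, mem_union, mem_Ioo, ← abs_lt]
    constructor
    · intro h
      rcases lt_or_ge |p| δ with hp | hp
      · exact Or.inr hp
      · left
        intro m
        by_cases hm : m = 0
        · simpa [hm] using hp
        · exact h m hm
    · rintro (h | h) m hm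
      · exact h m
      · have h1 : (1 : ℝ) ≤ |(m : ℝ)| := by exact_mod_cast Int.one_le_abs hm
        have h2 : π * |(m : ℝ)| ≤ |p - π * m| + |p| := by
          have := abs_sub_abs_le_abs_sub (π * (m : ℝ)) p
          rw [abs_mul, abs_of_pos pi_pos, abs_sub_comm] at this
          linarith
        nlinarith [pi_pos]
  rw [hset, setIntegral_union _ measurableSet_Ioo (integrableOn_cutSet hδ ht)]
  · refine Measure.integrableOn_of_bounded (M := π / 2) (by simp)
      (Measurable.aestronglyMeasurable (by fun_prop)) ?_
    filter_upwards [ae_restrict_mem measurableSet_Ioo] with p hp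
    exact abs_integrand_le ht ((abs_lt.2 hp).le.trans hδ'.le)
  · rw [Set.disjoint_left]
    intro p hp hp'
    have := hp 0
    simp only [Int.cast_zero, mul_zero, sub_zero] at this
    exact absurd (abs_lt.2 hp') (not_lt.2 this)

lemma tendsto_setIntegral_Ioo {t : ℝ} (ht : 0 < t) :
    Tendsto (fun δ : ℝ => ∫ p in Ioo (-δ) δ, p / sin p * exp (-t * p ^ 2)) (𝓝[>] 0) (𝓝 0) := by
  have hlim : Tendsto (fun δ : ℝ => π * δ) (𝓝[>] 0) (𝓝 0) := by
    have : Tendsto (fun δ : ℝ => π * δ) (𝓝 0) (𝓝 (π * 0)) := by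
      exact (continuous_const_mul π).tendsto 0
    rw [mul_zero] at this
    exact this.mono_left nhdsWithin_le_nhds
  refine squeeze_zero_norm' ?_ hlim
  have : ∀ᶠ δ : ℝ in 𝓝[>] 0, δ < π / 2 :=
    nhdsWithin_le_nhds (eventually_lt_nhds (by positivity))
  filter_upwards [this, self_mem_nhdsWithin] with δ hδ hδ0
  have h0 : (0 : ℝ) < δ := hδ0
  refine (norm_setIntegral_le_of_norm_le_const (s := Ioo (-δ) δ) (C := π / 2) (by simp) fun p hp =>
    abs_integrand_le ht ((abs_lt.2 hp).le.trans hδ.le)).trans (le_of_eq ?_)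
  rw [Real.volume_real_Ioo_of_le (by linarith)]
  ring

/-- The principal value integral
`(1/2π) p.v. ∫_ℝ (p/sin p) e^{−tp²} dp
  = (4π)^{−1/2} t^{−3/2} Σ_{k≥0} (2k+1) e^{−(2k+1)²/4t}`,
the principal value being the limit, as `δ → 0⁺`, of the integral over `ℝ` with the open
intervals of radius `δ` around the singular points `πm`, `m ∈ ℤ \ {0}`, removed (at
`p = 0` the integrand has a removable singularity); the series on the right converges
absolutely. -/
theorem pv_inv_sin_integral (t : ℝ) (ht : 0 < t) :
    Summable (fun k : ℕ =>
      (2 * (k : ℝ) + 1) * Real.exp (-(2 * (k : ℝ) + 1) ^ 2 / (4 * t))) ∧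
    Tendsto
      (fun δ : ℝ => (1 / (2 * Real.pi)) *
        ∫ p in {p : ℝ | ∀ m : ℤ, m ≠ 0 → δ ≤ |p - Real.pi * (m : ℝ)|},
          (p / Real.sin p) * Real.exp (-t * p ^ 2))
      (𝓝[>] (0 : ℝ))
      (𝓝 ((4 * Real.pi) ^ (-(1 : ℝ) / 2) * t ^ (-(3 : ℝ) / 2) *
        ∑' k : ℕ, (2 * (k : ℝ) + 1) * Real.exp (-(2 * (k : ℝ) + 1) ^ 2 / (4 * t)))) := by
  refine ⟨summable_odd ht, ?_⟩
  have h := ((tendsto_setIntegral_cutSet ht).add (tendsto_setIntegral_Ioo ht)).const_mul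
    (1 / (2 * π))
  have hconst : 1 / (2 * π) * (4 * π ^ 2 * (1 / (4 * π * t) ^ (3 / 2 : ℝ) * 2)) =
      (4 * π) ^ (-(1 : ℝ) / 2) * t ^ (-(3 : ℝ) / 2) := by
    rw [mul_rpow (by positivity) ht.le, neg_div, neg_div, rpow_neg (by positivity),
      rpow_neg ht.le, show (3 / 2 : ℝ) = 1 + 1 / 2 by norm_num,
      rpow_add (by positivity : (0 : ℝ) < 4 * π), rpow_one]
    field_simp
  rw [add_zero, integral_oddKernel_div_sin ht, ← mul_assoc (4 * π ^ 2), ← mul_assoc, hconst] at h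
  refine h.congr' ?_
  have : ∀ᶠ δ : ℝ in 𝓝[>] 0, δ < π / 2 :=
    nhdsWithin_le_nhds (eventually_lt_nhds (by positivity))
  filter_upwards [this, self_mem_nhdsWithin] with δ hδ hδ0
  rw [setIntegral_eq_cutSet_add hδ0 hδ ht]
end
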